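/- arXiv:2603.10530 — 3 statements merged into one kernel-verified Lean document; each statement's English description precedes it below -/
import Mathlib

section
/- Let n ≥ 1 and let Ω ⊂ ℂ^n be a bounded open strictly convex domain with smooth boundary. Let u : Ω → ℝ be a smooth strictly plurisubharmonic function solving the Kähler–Einstein potential equation det(u_{ij̄}) = e^{(n+1)u} in Ω with u(z) → +∞ as z → ∂Ω, and assume (as Cheng–Yau's existence theorem provides) that v = e^{-u} extends to a C² function on the closure of Ω with v = 0 on ∂Ω. Then the real Hessian D²_ℝ u (the Hessian of u viewed as a function on ℝ^{2n}) is positive definite at every point of Ω; that is, u is strictly convex. -/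
open Complex Matrix
open scoped ComplexOrder

noncomputable section

/-- Wirtinger derivative `∂/∂z_j` of a complex-valued function on `ℂⁿ`. -/
def wdz {n : ℕ} (f : (Fin n → ℂ) → ℂ) (j : Fin n) (z : Fin n → ℂ) : ℂ :=
  (fderiv ℝ f z (Pi.single j 1) - Complex.I * fderiv ℝ f z (Pi.single j Complex.I)) / 2

/-- Wirtinger derivative `∂/∂z̄_j` of a complex-valued function on `ℂⁿ`. -/
def wdzbar {n : ℕ} (f : (Fin n → ℂ) → ℂ) (j : Fin n) (z : Fin n → ℂ) : ℂ :=
  (fderiv ℝ f z (Pi.single j 1) + Complex.I * fderiv ℝ f z (Pi.single j Complex.I)) / 2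

/-- A real-valued function on `ℂⁿ` viewed as complex-valued. -/
def cplx {n : ℕ} (u : (Fin n → ℂ) → ℝ) : (Fin n → ℂ) → ℂ := fun z => (u z : ℂ)

/-- The complex Hessian `A = (u_{ij̄}) = (∂_i ∂_{j̄} u)`. -/
def hessA {n : ℕ} (u : (Fin n → ℂ) → ℝ) (z : Fin n → ℂ) : Matrix (Fin n) (Fin n) ℂ :=
  Matrix.of fun i j => wdz (wdzbar (cplx u) j) i z

/-- The matrix `B = (u_{ij}) = (∂_i ∂_j u)`. -/
def hessB {n : ℕ} (u : (Fin n → ℂ) → ℝ) (z : Fin n → ℂ) : Matrix (Fin n) (Fin n) ℂ :=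
  Matrix.of fun i j => wdz (wdz (cplx u) j) i z

/-- `u^{ij̄}`, the entries of the inverse of the complex Hessian, with the convention
`∑_j u^{ij̄} u_{kj̄} = δ_{ik}`. -/
def uInv {n : ℕ} (u : (Fin n → ℂ) → ℝ) (z : Fin n → ℂ) (i j : Fin n) : ℂ :=
  (hessA u z)⁻¹ j i

/-- Entrywise Wirtinger derivative `∂_i` of a matrix-valued function. -/
def mwdz {n : ℕ} (F : (Fin n → ℂ) → Matrix (Fin n) (Fin n) ℂ) (i : Fin n) (z : Fin n → ℂ) :
    Matrix (Fin n) (Fin n) ℂ :=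
  Matrix.of fun p q => wdz (fun w => F w p q) i z

/-- Entrywise Wirtinger derivative `∂_{j̄}` of a matrix-valued function. -/
def mwdzbar {n : ℕ} (F : (Fin n → ℂ) → Matrix (Fin n) (Fin n) ℂ) (j : Fin n) (z : Fin n → ℂ) :
    Matrix (Fin n) (Fin n) ℂ :=
  Matrix.of fun p q => wdzbar (fun w => F w p q) j z

/-- Entrywise complex conjugate of a matrix. -/
def mconj {n : ℕ} (M : Matrix (Fin n) (Fin n) ℂ) : Matrix (Fin n) (Fin n) ℂ :=
  M.map (starRingEnd ℂ)

/-- The real coordinate directions `x_1, …, x_n, y_1, …, y_n` of `ℂⁿ`. -/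
def realDir {n : ℕ} : (Fin n ⊕ Fin n) → (Fin n → ℂ)
  | Sum.inl j => Pi.single j 1
  | Sum.inr j => Pi.single j Complex.I

/-- The real Hessian of `u : ℂⁿ → ℝ` in the coordinates `(x_1,…,x_n,y_1,…,y_n)`. -/
def realHess {n : ℕ} (u : (Fin n → ℂ) → ℝ) (z : Fin n → ℂ) :
    Matrix (Fin n ⊕ Fin n) (Fin n ⊕ Fin n) ℝ :=
  Matrix.of fun a b => fderiv ℝ (fun w => fderiv ℝ u w (realDir b)) z (realDir a)

/-! ### Linear algebra -/

lemma ke_trace_mul_nonneg {n : ℕ} {S M : Matrix (Fin n) (Fin n) ℂ} (hS : S.PosSemidef)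
    (hM : M.PosSemidef) : 0 ≤ (S * M).trace.re := by
  open scoped MatrixOrder in
  obtain ⟨B, rfl⟩ := CStarAlgebra.nonneg_iff_eq_star_mul_self.mp hS.nonneg
  rw [Matrix.mul_assoc, Matrix.trace_mul_comm, Matrix.star_eq_conjTranspose]
  have := (hM.mul_mul_conjTranspose_same B).trace_nonneg
  exact (Complex.le_def.1 this).1

lemma ke_det_le_exp_trace {n : ℕ} {G S : Matrix (Fin n) (Fin n) ℂ} (hG : G.PosSemidef)
    (hS : S.PosSemidef) : (G * S).det.re ≤ Real.exp ((G * S).trace.re - n) := by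
  open scoped MatrixOrder in
  obtain ⟨B, rfl⟩ := CStarAlgebra.nonneg_iff_eq_star_mul_self.mp hS.nonneg
  have hP := hG.mul_mul_conjTranspose_same B
  have h1 : (G * (star B * B)).det = (B * G * Bᴴ).det := by
    simp only [Matrix.det_mul, Matrix.star_eq_conjTranspose]; ring
  have h2 : (G * (star B * B)).trace = (B * G * Bᴴ).trace := by
    rw [← Matrix.mul_assoc, Matrix.trace_mul_comm, Matrix.star_eq_conjTranspose,
      Matrix.mul_assoc]
  rw [h1, h2, hP.isHermitian.det_eq_prod_eigenvalues, hP.isHermitian.trace_eq_sum_eigenvalues]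
  have h3 : (∏ i, ((hP.isHermitian.eigenvalues i : ℝ) : ℂ)).re = ∏ i, hP.isHermitian.eigenvalues i := by
    rw [← Complex.ofReal_prod, Complex.ofReal_re]
  have h4 : (∑ i, ((hP.isHermitian.eigenvalues i : ℝ) : ℂ)).re = ∑ i, hP.isHermitian.eigenvalues i := by
    rw [← Complex.ofReal_sum, Complex.ofReal_re]
  erw [h3, h4]
  have h5 : (∑ i, hP.isHermitian.eigenvalues i) - n = ∑ i, (hP.isHermitian.eigenvalues i - 1) := by
    simp
  rw [h5, Real.exp_sum]
  refine Finset.prod_le_prod (fun i _ => hP.eigenvalues_nonneg i) (fun i _ => ?_)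
  have := Real.add_one_le_exp (hP.isHermitian.eigenvalues i - 1)
  linarith

lemma ke_isUnit_det {n : ℕ} {P : Matrix (Fin n) (Fin n) ℂ} (hP : P.PosDef) : IsUnit P.det :=
  (Matrix.isUnit_iff_isUnit_det _).1 hP.isUnit

/-- main determinant estimate -/
lemma ke_det_main {n : ℕ} {G S Y : Matrix (Fin n) (Fin n) ℂ} (hG : G.PosDef) (hS : S.PosDef)
    (h : (S - S * G * S - Y).PosSemidef) :
    (G * S).det.re ≤ Real.exp (-(S⁻¹ * Y).trace.re) := by
  refine (ke_det_le_exp_trace hG.posSemidef hS.posSemidef).trans (Real.exp_le_exp.2 ?_)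
  have h1 := ke_trace_mul_nonneg hS.inv.posSemidef h
  have hu := ke_isUnit_det hS
  have h2 : S⁻¹ * (S - S * G * S - Y) = 1 - G * S - S⁻¹ * Y := by
    rw [mul_sub, mul_sub, Matrix.nonsing_inv_mul _ hu, Matrix.mul_assoc,
      Matrix.nonsing_inv_mul_cancel_left _ _ hu]
  rw [h2] at h1
  simp at h1
  linarith

/-- concavity of log det -/
lemma ke_det_concave {n : ℕ} {P Q : Matrix (Fin n) (Fin n) ℂ} {a b s : ℝ} (hP : P.PosDef)
    (hQ : Q.PosDef) (ha : 0 < a) (hb : 0 < b) (hPa : P.det = (a : ℂ)) (hQb : Q.det = (b : ℂ))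
    (hs : 0 < s) (hSs : ((2⁻¹ : ℂ) • (P + Q)).det = (s : ℂ)) (hS : ((2⁻¹ : ℂ) • (P + Q)).PosDef) :
    a * b ≤ s ^ 2 := by
  set S := (2⁻¹ : ℂ) • (P + Q) with hSdef
  have h1 := ke_det_le_exp_trace hP.posSemidef hS.inv.posSemidef
  have h2 := ke_det_le_exp_trace hQ.posSemidef hS.inv.posSemidef
  have hu := ke_isUnit_det hS
  have hdi : (S⁻¹).det = ((s⁻¹ : ℝ) : ℂ) := by
    rw [Matrix.det_nonsing_inv, hSs, Ring.inverse_eq_inv', Complex.ofReal_inv]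
  rw [Matrix.det_mul, hPa, hdi, ← Complex.ofReal_mul, Complex.ofReal_re] at h1
  rw [Matrix.det_mul, hQb, hdi, ← Complex.ofReal_mul, Complex.ofReal_re] at h2
  have h3 : (P * S⁻¹).trace.re + (Q * S⁻¹).trace.re = 2 * n := by
    rw [← Complex.add_re, ← Matrix.trace_add, ← add_mul]
    have : P + Q = (2 : ℂ) • S := by rw [hSdef, smul_smul]; norm_num
    rw [this, Matrix.smul_mul, Matrix.mul_nonsing_inv _ hu]
    simp
  have h4 : (a * s⁻¹) * (b * s⁻¹) ≤ 1 := by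
    calc (a * s⁻¹) * (b * s⁻¹) ≤ _ := mul_le_mul h1 h2 (by positivity) (by positivity)
      _ = Real.exp 0 := by rw [← Real.exp_add]; congr 1; linarith
      _ = 1 := Real.exp_zero
  have : (a * s⁻¹) * (b * s⁻¹) = a * b / s ^ 2 := by field_simp
  rw [this, div_le_one (by positivity)] at h4
  exact h4

/-! ### One-variable second order calculus -/

/-- `φ` has value `a`, first derivative `b`, second derivative `c` at `0`. -/
def KeD2 (φ : ℝ → ℝ) (a b c : ℝ) : Prop :=
  φ 0 = a ∧ ∃ φ' : ℝ → ℝ, (∀ᶠ t in nhds (0 : ℝ), HasDerivAt φ (φ' t) t) ∧ φ' 0 = b ∧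
    HasDerivAt φ' c 0

lemma KeD2.add {φ χ : ℝ → ℝ} {a b c a' b' c' : ℝ} (h : KeD2 φ a b c) (h' : KeD2 χ a' b' c') :
    KeD2 (fun t => φ t + χ t) (a + a') (b + b') (c + c') := by
  obtain ⟨h0, f, hf, hf0, hf1⟩ := h
  obtain ⟨h0', g, hg, hg0, hg1⟩ := h'
  refine ⟨by simp [h0, h0'], fun t => f t + g t, ?_, by simp [hf0, hg0], hf1.add hg1⟩
  filter_upwards [hf, hg] with t h1 h2 using h1.add h2

lemma KeD2.const_mul {φ : ℝ → ℝ} {a b c : ℝ} (r : ℝ) (h : KeD2 φ a b c) :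
    KeD2 (fun t => r * φ t) (r * a) (r * b) (r * c) := by
  obtain ⟨h0, f, hf, hf0, hf1⟩ := h
  refine ⟨by simp [h0], fun t => r * f t, ?_, by simp [hf0], hf1.const_mul r⟩
  filter_upwards [hf] with t h1 using h1.const_mul r

lemma KeD2.const (r : ℝ) : KeD2 (fun _ => r) r 0 0 :=
  ⟨rfl, fun _ => 0, Filter.Eventually.of_forall fun t => hasDerivAt_const t r, rfl,
    hasDerivAt_const _ _⟩

lemma KeD2.lin (r : ℝ) : KeD2 (fun t => t * r) 0 r 0 :=
  ⟨by simp, fun _ => r, Filter.Eventually.of_forall fun t => by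
    simpa using (hasDerivAt_id t).mul_const r, rfl, hasDerivAt_const _ _⟩

lemma KeD2.mul {φ χ : ℝ → ℝ} {a b c a' b' c' : ℝ} (h : KeD2 φ a b c) (h' : KeD2 χ a' b' c') :
    KeD2 (fun t => φ t * χ t) (a * a') (b * a' + a * b') (c * a' + 2 * (b * b') + a * c') := by
  obtain ⟨h0, f, hf, hf0, hf1⟩ := h
  obtain ⟨h0', g, hg, hg0, hg1⟩ := h'
  refine ⟨by simp [h0, h0'], fun t => f t * χ t + φ t * g t, ?_, by simp [hf0, hg0, h0, h0'], ?_⟩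
  · filter_upwards [hf, hg] with t h1 h2 using h1.mul h2
  · have e1 := hf.self_of_nhds
    have e2 := hg.self_of_nhds
    rw [hf0] at e1
    rw [hg0] at e2
    have := (hf1.mul e2).add (e1.mul hg1)
    rw [hf0, hg0, h0, h0'] at this
    refine this.congr_deriv ?_
    ring

lemma KeD2.exp {φ : ℝ → ℝ} {a b c : ℝ} (h : KeD2 φ a b c) :
    KeD2 (fun t => Real.exp (φ t)) (Real.exp a) (Real.exp a * b)
      (Real.exp a * (b ^ 2 + c)) := by
  obtain ⟨h0, f, hf, hf0, hf1⟩ := h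
  refine ⟨by simp [h0], fun t => Real.exp (φ t) * f t, ?_, by simp [hf0, h0], ?_⟩
  · filter_upwards [hf] with t h1 using h1.exp
  · have e1 := hf.self_of_nhds
    rw [hf0] at e1
    have := e1.exp.mul hf1
    rw [hf0, h0] at this
    refine this.congr_deriv ?_
    ring

lemma KeD2.congr {φ : ℝ → ℝ} {a b c a' b' c' : ℝ} (h : KeD2 φ a b c) (ha : a = a') (hb : b = b')
    (hc : c = c') : KeD2 φ a' b' c' := by subst ha hb hc; exact h

lemma KeD2.nonpos_of_isLocalMax {φ : ℝ → ℝ} {a b c : ℝ} (h : KeD2 φ a b c)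
    (hm : IsLocalMax φ 0) : c ≤ 0 := by
  obtain ⟨h0, f, hf, hf0, hf1⟩ := h
  by_contra hc
  push Not at hc
  have hd : deriv φ =ᶠ[nhds 0] f := hf.mono fun t ht => ht.deriv
  have hdd : deriv (deriv φ) 0 = c := by rw [hd.deriv_eq]; exact hf1.deriv
  have hmin := isLocalMin_of_deriv_deriv_pos (f := φ) (x₀ := 0) (by rw [hdd]; exact hc)
    hm.deriv_eq_zero hf.self_of_nhds.continuousAt
  have hconst : φ =ᶠ[nhds 0] fun _ => φ 0 := by
    filter_upwards [hm, hmin] with t h1 h2 using le_antisymm h1 h2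
  have : deriv (deriv φ) 0 = 0 := by
    rw [hconst.deriv.deriv_eq]; simp
  rw [hdd] at this
  exact hc.ne' this


/-! ### Hessians -/

/-- squared Euclidean norm -/
def kq {n : ℕ} (k : Fin n → ℂ) : ℝ := ∑ j, Complex.normSq (k j)

/-- real part of Hermitian product -/
def kip {n : ℕ} (k d : Fin n → ℂ) : ℝ := (star k ⬝ᵥ d).re

/-- second derivative -/
def kB {n : ℕ} (u : (Fin n → ℂ) → ℝ) (z : Fin n → ℂ) :
    (Fin n → ℂ) →L[ℝ] (Fin n → ℂ) →L[ℝ] ℝ := fderiv ℝ (fderiv ℝ u) z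

lemma kq_nonneg {n : ℕ} (k : Fin n → ℂ) : 0 ≤ kq k :=
  Finset.sum_nonneg fun _ _ => Complex.normSq_nonneg _

lemma kq_pos {n : ℕ} {k : Fin n → ℂ} (hk : k ≠ 0) : 0 < kq k := by
  obtain ⟨j, hj⟩ := Function.ne_iff.1 hk
  exact Finset.sum_pos' (fun _ _ => Complex.normSq_nonneg _)
    ⟨j, Finset.mem_univ _, Complex.normSq_pos.2 hj⟩

lemma kq_zero {n : ℕ} : kq (0 : Fin n → ℂ) = 0 := by simp [kq]

lemma kq_neg {n : ℕ} (k : Fin n → ℂ) : kq (-k) = kq k := by simp [kq]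

lemma kq_I {n : ℕ} (k : Fin n → ℂ) : kq (Complex.I • k) = kq k := by simp [kq]

lemma kq_eq_dot {n : ℕ} (k : Fin n → ℂ) : kq k = (star k ⬝ᵥ k).re := by
  simp only [kq, dotProduct, Complex.re_sum, Pi.star_apply]
  refine Finset.sum_congr rfl fun j _ => ?_
  simp [Complex.normSq_apply]

lemma kq_continuous {n : ℕ} : Continuous (kq : (Fin n → ℂ) → ℝ) := by
  unfold kq
  exact continuous_finsetSum _ fun j _ => Complex.continuous_normSq.comp (continuous_apply j)

lemma norm_sq_le_kq {n : ℕ} (k : Fin n → ℂ) : ‖k‖ ^ 2 ≤ kq k := by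
  have h : ‖k‖ ≤ Real.sqrt (kq k) := by
    refine (pi_norm_le_iff_of_nonneg (Real.sqrt_nonneg _)).2 fun j => ?_
    refine Real.le_sqrt_of_sq_le ?_
    rw [Complex.sq_norm]
    exact Finset.single_le_sum (f := fun j => Complex.normSq (k j))
      (fun _ _ => Complex.normSq_nonneg _) (Finset.mem_univ j)
  calc ‖k‖ ^ 2 ≤ (Real.sqrt (kq k)) ^ 2 := by gcongr
    _ = kq k := Real.sq_sqrt (kq_nonneg k)

lemma kq_le_norm_sq {n : ℕ} (k : Fin n → ℂ) : kq k ≤ n * ‖k‖ ^ 2 := by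
  have : ∀ j ∈ (Finset.univ : Finset (Fin n)), Complex.normSq (k j) ≤ ‖k‖ ^ 2 := fun j _ => by
    rw [← Complex.sq_norm]
    gcongr
    exact norm_le_pi_norm k j
  simpa [kq] using Finset.sum_le_card_nsmul _ _ _ this

lemma kq_add_smul {n : ℕ} (k d : Fin n → ℂ) (t : ℝ) :
    kq (k + t • d) = kq k + (t * (2 * kip k d) + t * (t * kq d)) := by
  simp only [kq, kip, dotProduct, Complex.re_sum, Finset.mul_sum]
  rw [← Finset.sum_add_distrib, ← Finset.sum_add_distrib]
  refine Finset.sum_congr rfl fun j _ => ?_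
  simp [Complex.normSq_apply]
  ring

lemma keD2_q {n : ℕ} (k d : Fin n → ℂ) :
    KeD2 (fun t => kq (k + t • d)) (kq k) (2 * kip k d) (2 * kq d) := by
  have h : (fun t : ℝ => kq (k + t • d)) =
      fun t => kq k + (t * (2 * kip k d) + (t * 1) * (t * kq d)) := by
    funext t; rw [kq_add_smul]; ring
  rw [h]
  exact ((KeD2.const (kq k)).add ((KeD2.lin (2 * kip k d)).add
    ((KeD2.lin 1).mul (KeD2.lin (kq d))))).congr (by ring) (by ring) (by ring)

lemma kip_cs {n : ℕ} (k d : Fin n → ℂ) :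
    kip k d ^ 2 + kip k (Complex.I • d) ^ 2 ≤ kq k * kq d := by
  have h1 : kip k d ^ 2 + kip k (Complex.I • d) ^ 2 = ‖star k ⬝ᵥ d‖ ^ 2 := by
    rw [Complex.sq_norm, Complex.normSq_apply]
    simp [kip]
    ring
  rw [h1]
  have h2 : ‖star k ⬝ᵥ d‖ ≤ ∑ j, ‖k j‖ * ‖d j‖ := by
    refine (norm_sum_le _ _).trans (le_of_eq ?_)
    simp
  calc ‖star k ⬝ᵥ d‖ ^ 2 ≤ (∑ j, ‖k j‖ * ‖d j‖) ^ 2 := by gcongr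
    _ ≤ (∑ j, ‖k j‖ ^ 2) * (∑ j, ‖d j‖ ^ 2) := Finset.sum_mul_sq_le_sq_mul_sq _ _ _
    _ = kq k * kq d := by simp [kq, Complex.sq_norm]

lemma keD2_line {n : ℕ} {f : (Fin n → ℂ) → ℝ} {z : Fin n → ℂ} (hf : ContDiffAt ℝ 2 f z)
    (w : Fin n → ℂ) : KeD2 (fun t => f (z + t • w)) (f z) (fderiv ℝ f z w) (kB f z w w) := by
  have hl : ∀ t : ℝ, HasDerivAt (fun t : ℝ => z + t • w) w t := fun t => by
    simpa using ((hasDerivAt_id t).smul_const w).const_add z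
  have hd : ∀ᶠ y in nhds z, DifferentiableAt ℝ f y := by
    filter_upwards [hf.eventually (by simp)] with y hy using hy.differentiableAt (by simp)
  have ht : Filter.Tendsto (fun t : ℝ => z + t • w) (nhds 0) (nhds z) := by
    simpa using (hl 0).continuousAt.tendsto
  refine ⟨by simp, fun t => fderiv ℝ f (z + t • w) w, ?_, by simp, ?_⟩
  · filter_upwards [ht.eventually hd] with t h1
    exact h1.hasFDerivAt.comp_hasDerivAt t (hl t)
  · have h2 : HasFDerivAt (fderiv ℝ f) (kB f z) (z + (0 : ℝ) • w) := by
      have := ((hf.fderiv_right (m := 1) (by norm_num)).differentiableAt (by simp)).hasFDerivAt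
      simpa [kB] using this
    have h3 := h2.comp_hasDerivAt (0 : ℝ) (hl 0)
    exact (ContinuousLinearMap.apply ℝ ℝ w).hasFDerivAt.comp_hasDerivAt (0 : ℝ) h3

/-- A vector in terms of the real basis -/
lemma ke_vec_eq {n : ℕ} (w : Fin n → ℂ) :
    w = ∑ j, ((w j).re • (Pi.single j 1 : Fin n → ℂ) + (w j).im • (Pi.single j Complex.I : Fin n → ℂ)) := by
  funext i
  simp [Finset.sum_apply, Pi.single_apply, Finset.sum_add_distrib]

lemma ke_vec_eq_I {n : ℕ} (w : Fin n → ℂ) :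
    Complex.I • w = ∑ j, ((w j).re • (Pi.single j Complex.I : Fin n → ℂ)
      - (w j).im • (Pi.single j 1 : Fin n → ℂ)) := by
  funext i
  simp [Finset.sum_apply, Pi.single_apply]
  conv_lhs => rw [← Complex.re_add_im (w i)]
  ring_nf
  simp; ring

lemma ke_hessA {n : ℕ} {u : (Fin n → ℂ) → ℝ} {z : Fin n → ℂ} (hu : ContDiffAt ℝ 2 u z)
    (i j : Fin n) : hessA u z i j =
      (((kB u z (Pi.single i 1) (Pi.single j 1) + kB u z (Pi.single i I) (Pi.single j I) : ℝ) : ℂ)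
      + I * ((kB u z (Pi.single i 1) (Pi.single j I) - kB u z (Pi.single i I) (Pi.single j 1) : ℝ)
        : ℂ)) / 4 := by
  have hd : ∀ᶠ y in nhds z, DifferentiableAt ℝ u y := by
    filter_upwards [hu.eventually (by simp)] with y hy using hy.differentiableAt (by simp)
  have h1 : wdzbar (cplx u) j =ᶠ[nhds z] fun y =>
      (((fderiv ℝ u y (Pi.single j 1) : ℝ) : ℂ) + I * ((fderiv ℝ u y (Pi.single j I) : ℝ) : ℂ)) / 2 := by
    filter_upwards [hd] with y hy
    have : HasFDerivAt (cplx u) (Complex.ofRealCLM.comp (fderiv ℝ u y)) y :=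
      Complex.ofRealCLM.hasFDerivAt.comp y hy.hasFDerivAt
    simp [wdzbar, this.fderiv]
  have h2 : HasFDerivAt (fderiv ℝ u) (kB u z) z :=
    ((hu.fderiv_right (m := 1) (by norm_num)).differentiableAt (by simp)).hasFDerivAt
  have h3 : ∀ e : Fin n → ℂ, HasFDerivAt (fun y => ((fderiv ℝ u y e : ℝ) : ℂ))
      (Complex.ofRealCLM.comp ((ContinuousLinearMap.apply ℝ ℝ e).comp (kB u z))) z := fun e =>
    Complex.ofRealCLM.hasFDerivAt.comp z
      ((ContinuousLinearMap.apply ℝ ℝ e).hasFDerivAt.comp z h2)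
  have h4 := ((h3 (Pi.single j 1)).add ((h3 (Pi.single j I)).const_mul I)).mul_const (2⁻¹ : ℂ)
  have h5 : fderiv ℝ (wdzbar (cplx u) j) z = _ :=
    h1.fderiv_eq.trans (by simpa [div_eq_mul_inv] using h4.fderiv)
  simp only [hessA, wdz, Matrix.of_apply, h5]
  simp
  ring_nf
  simp; ring

/-- transposed complex Hessian -/
def kG {n : ℕ} (u : (Fin n → ℂ) → ℝ) (z : Fin n → ℂ) : Matrix (Fin n) (Fin n) ℂ := (hessA u z)ᵀ

lemma ke_bilin_sum {n : ℕ} {ι : Type*} [Fintype ι]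
    (B : (Fin n → ℂ) →L[ℝ] (Fin n → ℂ) →L[ℝ] ℝ)
    (f g : ι → (Fin n → ℂ)) : B (∑ j, f j) (∑ i, g i) = ∑ j, ∑ i, B (f j) (g i) := by
  rw [map_sum, Finset.sum_comm]
  refine Finset.sum_congr rfl fun i _ => ?_
  rw [map_sum, _root_.sum_apply]

lemma ke_form {n : ℕ} {u : (Fin n → ℂ) → ℝ} {z : Fin n → ℂ} (hu : ContDiffAt ℝ 2 u z)
    (w : Fin n → ℂ) : (star w ⬝ᵥ (kG u z *ᵥ w)).re =
      (kB u z w w + kB u z (I • w) (I • w)) / 4 := by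
  have e1 : kB u z w w = ∑ j, ∑ i, kB u z
      ((w j).re • (Pi.single j 1 : Fin n → ℂ) + (w j).im • (Pi.single j Complex.I : Fin n → ℂ))
      ((w i).re • (Pi.single i 1 : Fin n → ℂ) + (w i).im • (Pi.single i Complex.I : Fin n → ℂ)) := by
    conv_lhs => rw [ke_vec_eq w]
    exact ke_bilin_sum _ _ _
  have e2 : kB u z (I • w) (I • w) = ∑ j, ∑ i, kB u z
      ((w j).re • (Pi.single j Complex.I : Fin n → ℂ) - (w j).im • (Pi.single j 1 : Fin n → ℂ))
      ((w i).re • (Pi.single i Complex.I : Fin n → ℂ) - (w i).im • (Pi.single i 1 : Fin n → ℂ)) := by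
    rw [ke_vec_eq_I w]
    exact ke_bilin_sum _ _ _
  rw [e1, e2, ← Finset.sum_add_distrib, Finset.sum_div]
  simp only [dotProduct, mulVec, Finset.mul_sum, Complex.re_sum]
  rw [Finset.sum_comm]
  refine Finset.sum_congr rfl fun j _ => ?_
  rw [← Finset.sum_add_distrib, Finset.sum_div]
  refine Finset.sum_congr rfl fun i _ => ?_
  simp only [kG, Matrix.transpose_apply, ke_hessA hu, map_add, map_sub, map_smul,
    _root_.add_apply, _root_.sub_apply, _root_.smul_apply]
  have h4 : (4 : ℂ) = ((4 : ℝ) : ℂ) := by norm_num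
  rw [h4]
  simp [Complex.div_ofReal_re, Complex.div_ofReal_im, -Complex.ofReal_ofNat]
  ring


/-! ### Regularity -/

lemma ke_kB_contDiffOn {n : ℕ} {Ω : Set (Fin n → ℂ)} (hΩo : IsOpen Ω)
    {u : (Fin n → ℂ) → ℝ} (hu : ContDiffOn ℝ (⊤ : ℕ∞) u Ω) : ContDiffOn ℝ 1 (kB u) Ω := by
  have h1 : ContDiffOn ℝ 2 (fderiv ℝ u) Ω := by
    have h3 : ContDiffOn ℝ 3 u Ω := hu.of_le (WithTop.coe_le_coe.2 (le_top : (3 : ℕ∞) ≤ ⊤))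
    exact h3.fderiv_of_isOpen hΩo (by norm_num)
  exact h1.fderiv_of_isOpen hΩo (by norm_num)

lemma ke_contDiffAt {n : ℕ} {Ω : Set (Fin n → ℂ)} (hΩo : IsOpen Ω)
    {u : (Fin n → ℂ) → ℝ} (hu : ContDiffOn ℝ (⊤ : ℕ∞) u Ω) {z : Fin n → ℂ} (hz : z ∈ Ω) :
    ContDiffAt ℝ 2 u z :=
  (hu.contDiffAt (hΩo.mem_nhds hz)).of_le (WithTop.coe_le_coe.2 (le_top : (2 : ℕ∞) ≤ ⊤))

lemma ke_kG_contDiffOn {n : ℕ} {Ω : Set (Fin n → ℂ)} (hΩo : IsOpen Ω)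
    {u : (Fin n → ℂ) → ℝ} (hu : ContDiffOn ℝ (⊤ : ℕ∞) u Ω) (i j : Fin n) :
    ContDiffOn ℝ 1 (fun z => kG u z i j) Ω := by
  have hB := ke_kB_contDiffOn hΩo hu
  have h1 : ∀ a b : Fin n → ℂ, ContDiffOn ℝ 1 (fun z => kB u z a b) Ω := fun a b =>
    (hB.clm_apply contDiffOn_const).clm_apply contDiffOn_const
  have h2 : ∀ f : (Fin n → ℂ) → ℝ, ContDiffOn ℝ 1 f Ω → ContDiffOn ℝ 1 (fun z => ((f z : ℝ) : ℂ)) Ω :=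
    fun f hf => Complex.ofRealCLM.contDiff.comp_contDiffOn hf
  refine ContDiffOn.congr (f := fun z =>
    (((kB u z (Pi.single j 1) (Pi.single i 1) + kB u z (Pi.single j I) (Pi.single i I) : ℝ) : ℂ)
      + I * ((kB u z (Pi.single j 1) (Pi.single i I) - kB u z (Pi.single j I) (Pi.single i 1) : ℝ)
        : ℂ)) / 4) ?_ (fun z hz => ke_hessA (ke_contDiffAt hΩo hu hz) j i)
  exact ((h2 _ ((h1 _ _).add (h1 _ _))).add (contDiffOn_const.mul
    (h2 _ ((h1 _ _).sub (h1 _ _))))).div_const _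

lemma ke_det_contDiffOn {n : ℕ} {Ω : Set (Fin n → ℂ)}
    {M : (Fin n → ℂ) → Matrix (Fin n) (Fin n) ℂ}
    (hM : ∀ i j, ContDiffOn ℝ 1 (fun z => M z i j) Ω) :
    ContDiffOn ℝ 1 (fun z => (M z).det) Ω := by
  simp only [Matrix.det_apply]
  refine ContDiffOn.sum fun σ _ => ?_
  refine ContDiffOn.congr (f := fun z => ((Equiv.Perm.sign σ : ℤ) : ℂ) * ∏ i, M z (σ i) i) ?_
    (fun z _ => by rw [Units.smul_def, zsmul_eq_mul])
  exact contDiffOn_const.mul (contDiffOn_prod fun i _ => hM _ _)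

lemma ke_inv_contDiffOn {n : ℕ} {Ω : Set (Fin n → ℂ)}
    {M : (Fin n → ℂ) → Matrix (Fin n) (Fin n) ℂ}
    (hM : ∀ i j, ContDiffOn ℝ 1 (fun z => M z i j) Ω) (hd : ∀ z ∈ Ω, (M z).det ≠ 0) (i j : Fin n) :
    ContDiffOn ℝ 1 (fun z => (M z)⁻¹ i j) Ω := by
  have h1 : ContDiffOn ℝ 1 (fun z => (M z).adjugate i j) Ω := by
    simp only [Matrix.adjugate_apply]
    refine ke_det_contDiffOn fun a b => ?_
    by_cases hab : a = j
    · subst hab; simpa using contDiffOn_const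
    · simpa [Matrix.updateRow_apply, hab] using hM a b
  simp only [Matrix.inv_def, Matrix.smul_apply, Ring.inverse_eq_inv', smul_eq_mul]
  exact ((ke_det_contDiffOn hM).inv hd).mul h1

lemma ke_inv_continuousOn {X : Type*} [TopologicalSpace X] {n : ℕ} {s : Set X}
    {M : X → Matrix (Fin n) (Fin n) ℂ}
    (hM : ContinuousOn M s) (hd : ∀ z ∈ s, (M z).det ≠ 0) : ContinuousOn (fun z => (M z)⁻¹) s := by
  simp only [Matrix.inv_def, Ring.inverse_eq_inv']
  have h1 : Continuous (fun A : Matrix (Fin n) (Fin n) ℂ => A.det) := continuous_id.matrix_det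
  have h2 : Continuous (fun A : Matrix (Fin n) (Fin n) ℂ => A.adjugate) := continuous_id.matrix_adjugate
  exact ((h1.comp_continuousOn hM).inv₀ hd).smul (h2.comp_continuousOn hM)

lemma ke_lipschitz {n : ℕ} {K : Set (Fin n → ℂ)} (hK : IsCompact K) (hKc : Convex ℝ K)
    {P : (Fin n → ℂ) → Matrix (Fin n) (Fin n) ℂ}
    (hP : ∀ i j, ContDiffOn ℝ 1 (fun z => P z i j) K) :
    ∃ L : ℝ, 0 ≤ L ∧ ∀ x ∈ K, ∀ y ∈ K, ∀ w, kq ((P x - P y) *ᵥ w) ≤ L * ‖x - y‖ ^ 2 * kq w := by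
  have h1 : ContDiffOn ℝ 1 (fun z => (fun i j => P z i j : Fin n → Fin n → ℂ)) K :=
    contDiffOn_pi.2 fun i => contDiffOn_pi.2 fun j => hP i j
  obtain ⟨L, hL⟩ := h1.exists_lipschitzOnWith one_ne_zero hKc hK
  refine ⟨n * (n * (L : ℝ) ^ 2), by positivity, fun x hx y hy w => ?_⟩
  have h2 := hL.dist_le_mul x hx y hy
  rw [dist_eq_norm, dist_eq_norm] at h2
  have h3 : ∀ i j, ‖(P x - P y) i j‖ ≤ L * ‖x - y‖ := fun i j =>
    ((norm_le_pi_norm (((fun i j => P x i j : Fin n → Fin n → ℂ) - fun i j => P y i j) i) j).trans (norm_le_pi_norm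
      ((fun i j => P x i j : Fin n → Fin n → ℂ) - fun i j => P y i j) i)).trans h2
  have h4 : ∀ i ∈ (Finset.univ : Finset (Fin n)), Complex.normSq (((P x - P y) *ᵥ w) i) ≤
      (n * (L * ‖x - y‖) ^ 2) * kq w := fun i _ => by
    rw [← Complex.sq_norm]
    have h5 : ‖((P x - P y) *ᵥ w) i‖ ≤ ∑ j, ‖(P x - P y) i j‖ * ‖w j‖ := by
      rw [Matrix.mulVec, dotProduct]
      refine (norm_sum_le _ _).trans (le_of_eq ?_)
      simp
    calc ‖((P x - P y) *ᵥ w) i‖ ^ 2 ≤ (∑ j, ‖(P x - P y) i j‖ * ‖w j‖) ^ 2 := by gcongr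
      _ ≤ (∑ j, ‖(P x - P y) i j‖ ^ 2) * (∑ j, ‖w j‖ ^ 2) := Finset.sum_mul_sq_le_sq_mul_sq _ _ _
      _ = (∑ j, ‖(P x - P y) i j‖ ^ 2) * kq w := by simp [kq, Complex.sq_norm]
      _ ≤ _ := by
        refine mul_le_mul_of_nonneg_right ?_ (kq_nonneg w)
        have : ∀ j ∈ (Finset.univ : Finset (Fin n)), ‖(P x - P y) i j‖ ^ 2 ≤ (L * ‖x - y‖) ^ 2 :=
          fun j _ => by gcongr; exact h3 i j
        simpa using Finset.sum_le_card_nsmul _ _ _ this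
  have h6 := Finset.sum_le_card_nsmul _ _ _ h4
  simp only [Finset.card_univ, Fintype.card_fin, nsmul_eq_mul] at h6
  calc kq ((P x - P y) *ᵥ w) ≤ _ := h6
    _ = _ := by ring

/-- complex covector of a real functional -/
def kl {n : ℕ} (D : (Fin n → ℂ) →L[ℝ] ℝ) : Fin n → ℂ := fun j =>
  ((D (Pi.single j 1) : ℂ) - I * (D (Pi.single j I) : ℂ)) / 2

lemma kl_dot {n : ℕ} (D : (Fin n → ℂ) →L[ℝ] ℝ) (w : Fin n → ℂ) :
    kl D ⬝ᵥ w = ((D w : ℂ) - I * (D (I • w) : ℂ)) / 2 := by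
  have e1 : D w = ∑ j, ((w j).re * D (Pi.single j 1) + (w j).im * D (Pi.single j I)) := by
    conv_lhs => rw [ke_vec_eq w]
    simp
  have e2 : D (I • w) = ∑ j, ((w j).re * D (Pi.single j I) - (w j).im * D (Pi.single j 1)) := by
    rw [ke_vec_eq_I w]
    simp
  rw [e1, e2]
  simp only [kl, dotProduct, Complex.ofReal_sum, Finset.mul_sum]
  rw [← Finset.sum_sub_distrib, Finset.sum_div]
  refine Finset.sum_congr rfl fun j _ => ?_
  conv_lhs => rw [← Complex.re_add_im (w j)]
  push_cast
  ring_nf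
  simp
  ring

lemma kl_normSq {n : ℕ} (D : (Fin n → ℂ) →L[ℝ] ℝ) (w : Fin n → ℂ) :
    Complex.normSq (kl D ⬝ᵥ w) = (D w ^ 2 + D (I • w) ^ 2) / 4 := by
  rw [kl_dot]
  simp [Complex.normSq_apply]
  ring

/-- rank one matrix -/
def kX {n : ℕ} (D : (Fin n → ℂ) →L[ℝ] ℝ) : Matrix (Fin n) (Fin n) ℂ := vecMulVec (star (kl D)) (kl D)

lemma kX_form {n : ℕ} (D : (Fin n → ℂ) →L[ℝ] ℝ) (w : Fin n → ℂ) :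
    (star w ⬝ᵥ (kX D *ᵥ w)).re = (D w ^ 2 + D (I • w) ^ 2) / 4 := by
  rw [← kl_normSq, kX, Matrix.vecMulVec_mulVec]
  have : star w ⬝ᵥ star (kl D) = star (kl D ⬝ᵥ w) := by
    rw [Matrix.star_dotProduct_star]
  simp [Complex.normSq_apply, this]

lemma kX_trace_pos {n : ℕ} {D : (Fin n → ℂ) →L[ℝ] ℝ} {w : Fin n → ℂ} (hD : D w ≠ 0)
    {S : Matrix (Fin n) (Fin n) ℂ} (hS : S.PosDef) : 0 < (kX D * S).trace.re := by
  have h0 : kl D ≠ 0 := by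
    intro h
    have := kl_normSq D w
    rw [h] at this
    simp at this
    have := sq_nonneg (D (I • w))
    have := sq_pos_of_ne_zero hD
    linarith
  have h1 : star (kl D) ≠ 0 := by simpa using h0
  have h2 := hS.dotProduct_mulVec_pos h1
  rw [star_star] at h2
  rw [kX, Matrix.vecMulVec_mul, Matrix.trace_vecMulVec, dotProduct_comm, ← Matrix.dotProduct_mulVec]
  exact (Complex.lt_def.1 h2).1

lemma kX_continuous {n : ℕ} : Continuous (kX : ((Fin n → ℂ) →L[ℝ] ℝ) → _) := by
  have h : Continuous (kl : ((Fin n → ℂ) →L[ℝ] ℝ) → _) := by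
    refine continuous_pi fun j => ?_
    have h1 : ∀ e : Fin n → ℂ, Continuous fun D : (Fin n → ℂ) →L[ℝ] ℝ => ((D e : ℝ) : ℂ) := fun e =>
      Complex.continuous_ofReal.comp (ContinuousLinearMap.apply ℝ ℝ e).continuous
    exact ((h1 _).sub (continuous_const.mul (h1 _))).div_const _
  unfold kX
  exact (continuous_star.comp h).matrix_vecMulVec h

lemma ke_realHess {n : ℕ} {u : (Fin n → ℂ) → ℝ} {z : Fin n → ℂ} (hu : ContDiffAt ℝ 2 u z)
    (h : ∀ k : Fin n → ℂ, k ≠ 0 → 0 < kB u z k k) : (realHess u z).PosDef := by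
  have h2 : HasFDerivAt (fderiv ℝ u) (kB u z) z :=
    ((hu.fderiv_right (m := 1) (by norm_num)).differentiableAt (by simp)).hasFDerivAt
  have hent : ∀ a b, realHess u z a b = kB u z (realDir a) (realDir b) := fun a b => by
    have := ((ContinuousLinearMap.apply ℝ ℝ (realDir b)).hasFDerivAt.comp z h2).fderiv
    simp only [realHess, Matrix.of_apply]
    have h3 : (fun w => fderiv ℝ u w (realDir b)) =
      (ContinuousLinearMap.apply ℝ ℝ (realDir b : Fin n → ℂ)) ∘ fderiv ℝ u := rfl
    rw [h3, this]; rfl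
  have hsymm : IsSymmSndFDerivAt ℝ u z := hu.isSymmSndFDerivAt (by simp)
  refine Matrix.PosDef.of_dotProduct_mulVec_pos ?_ fun x hx => ?_
  · ext a b
    simp only [Matrix.conjTranspose_apply, hent, star_trivial]
    exact hsymm _ _
  · set k : Fin n → ℂ := ∑ a, x a • realDir a with hk
    have hkj : ∀ j, k j = ⟨x (Sum.inl j), x (Sum.inr j)⟩ := fun j => by
      rw [hk]
      simp [Finset.sum_apply, realDir, Pi.single_apply]
      apply Complex.ext <;> simp
    have hk0 : k ≠ 0 := by
      intro h0
      apply hx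
      funext a
      rcases a with j | j
      · have := congrArg Complex.re (hkj j); simpa [h0] using this.symm
      · have := congrArg Complex.im (hkj j); simpa [h0] using this.symm
    have e : star x ⬝ᵥ realHess u z *ᵥ x = kB u z k k := by
      rw [hk, ke_bilin_sum]
      simp only [dotProduct, mulVec, Finset.mul_sum, hent]
      refine Finset.sum_congr rfl fun a _ => Finset.sum_congr rfl fun b _ => ?_
      simp; ring
    rw [e]
    exact h k hk0


/-! ### Hypotheses and weak convexity -/

/-- The hypotheses used -/
structure KeHyp (n : ℕ) (Ω : Set (Fin n → ℂ)) (u : (Fin n → ℂ) → ℝ) : Prop where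
  op : IsOpen Ω
  bdd : Bornology.IsBounded Ω
  cvx : Convex ℝ Ω
  smooth : ContDiffOn ℝ (⊤ : ℕ∞) u Ω
  psh : ∀ z ∈ Ω, (hessA u z).PosDef
  ke : ∀ z ∈ Ω, (hessA u z).det = (Real.exp ((n + 1) * u z) : ℂ)
  blow : ∀ p ∈ frontier Ω, Filter.Tendsto u (nhdsWithin p Ω) Filter.atTop

section weak
variable {n : ℕ} {Ω : Set (Fin n → ℂ)} {u : (Fin n → ℂ) → ℝ}

lemma KeHyp.cd (h : KeHyp n Ω u) {z : Fin n → ℂ} (hz : z ∈ Ω) : ContDiffAt ℝ 2 u z :=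
  ke_contDiffAt h.op h.smooth hz

lemma KeHyp.cont (h : KeHyp n Ω u) : ContinuousOn u Ω := h.smooth.continuousOn

lemma KeHyp.pd (h : KeHyp n Ω u) {z : Fin n → ℂ} (hz : z ∈ Ω) : (kG u z).PosDef :=
  (h.psh z hz).transpose

lemma KeHyp.det (h : KeHyp n Ω u) {z : Fin n → ℂ} (hz : z ∈ Ω) :
    (kG u z).det = ((Real.exp ((n + 1) * u z) : ℝ) : ℂ) := by
  rw [kG, Matrix.det_transpose]; exact h.ke z hz

lemma KeHyp.compact (h : KeHyp n Ω u) (M : ℝ) : IsCompact {z | z ∈ Ω ∧ u z ≤ M} := by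
  refine Metric.isCompact_of_isClosed_isBounded ?_ (h.bdd.subset fun z hz => hz.1)
  refine isClosed_of_closure_subset fun p hp => ?_
  have hne : (nhdsWithin p {z | z ∈ Ω ∧ u z ≤ M}).NeBot := mem_closure_iff_nhdsWithin_neBot.1 hp
  have hpc : p ∈ closure Ω := closure_mono (fun z hz => hz.1) hp
  have hle : nhdsWithin p {z | z ∈ Ω ∧ u z ≤ M} ≤ nhdsWithin p Ω :=
    nhdsWithin_mono _ fun z hz => hz.1
  have hev : ∀ᶠ z in nhdsWithin p {z | z ∈ Ω ∧ u z ≤ M}, u z ≤ M := by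
    filter_upwards [self_mem_nhdsWithin] with z hz using hz.2
  by_cases hpΩ : p ∈ Ω
  · exact ⟨hpΩ, le_of_tendsto ((h.cont p hpΩ).mono_left hle) hev⟩
  · exfalso
    have hf : p ∈ frontier Ω := by rw [h.op.frontier_eq]; exact ⟨hpc, hpΩ⟩
    have := ((h.blow p hf).mono_left hle).eventually (Filter.eventually_gt_atTop M)
    obtain ⟨z, h1, h2⟩ := (this.and hev).exists
    linarith

lemma KeHyp.bddBelow (h : KeHyp n Ω u) : ∃ m, ∀ z ∈ Ω, m ≤ u z := by
  obtain ⟨C, hC⟩ := (h.compact 0).exists_bound_of_continuousOn (h.cont.mono fun z hz => hz.1)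
  refine ⟨-|C|, fun z hz => ?_⟩
  by_cases h0 : u z ≤ 0
  · have := hC z ⟨hz, h0⟩
    rw [Real.norm_eq_abs] at this
    have h1 := neg_abs_le (u z)
    have h2 := le_abs_self C
    linarith
  · have := abs_nonneg C
    linarith

/-- mean of inverses -/
def kS (u : (Fin n → ℂ) → ℝ) (x y : Fin n → ℂ) : Matrix (Fin n) (Fin n) ℂ :=
  (2⁻¹ : ℂ) • ((kG u x)⁻¹ + (kG u y)⁻¹)

lemma KeHyp.pdS (h : KeHyp n Ω u) {x y : Fin n → ℂ} (hx : x ∈ Ω) (hy : y ∈ Ω) :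
    (kS u x y).PosDef := by
  have h2 : (0 : ℂ) < 2⁻¹ := by
    rw [Complex.lt_def]; norm_num
  exact ((h.pd hx).inv.add (h.pd hy).inv).smul h2

lemma kS_mulVec (x y w : Fin n → ℂ) :
    kS u x y *ᵥ w = (2⁻¹ : ℝ) • ((kG u x)⁻¹ *ᵥ w + (kG u y)⁻¹ *ᵥ w) := by
  rw [kS, Matrix.smul_mulVec, Matrix.add_mulVec]
  ext j
  simp
  ring

lemma ke_form_conj {G S : Matrix (Fin n) (Fin n) ℂ} (hS : S.IsHermitian) (w : Fin n → ℂ) :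
    star w ⬝ᵥ ((S * G * S) *ᵥ w) = star (S *ᵥ w) ⬝ᵥ (G *ᵥ (S *ᵥ w)) := by
  rw [Matrix.star_mulVec, hS.eq, ← Matrix.dotProduct_mulVec, Matrix.mulVec_mulVec,
    Matrix.mulVec_mulVec, Matrix.mul_assoc]

lemma ke_form_inv {G : Matrix (Fin n) (Fin n) ℂ} (hG : G.PosDef) (w : Fin n → ℂ) :
    star (G⁻¹ *ᵥ w) ⬝ᵥ (G *ᵥ (G⁻¹ *ᵥ w)) = star w ⬝ᵥ (G⁻¹ *ᵥ w) := by
  rw [← ke_form_conj hG.inv.isHermitian, Matrix.nonsing_inv_mul _ (ke_isUnit_det hG), one_mul]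

lemma ke_herm_im {M : Matrix (Fin n) (Fin n) ℂ} (hM : M.IsHermitian) (w : Fin n → ℂ) :
    (star w ⬝ᵥ (M *ᵥ w)).im = 0 := by
  have : star (star w ⬝ᵥ (M *ᵥ w)) = star w ⬝ᵥ (M *ᵥ w) := by
    rw [← Matrix.star_dotProduct_star, star_star, Matrix.star_mulVec, hM.eq, Matrix.dotProduct_mulVec,
      dotProduct_comm, dotProduct_comm]
  exact Complex.conj_eq_iff_im.1 this

lemma KeHyp.core (h : KeHyp n Ω u) {x y : Fin n → ℂ} (hx : x ∈ Ω) (hy : y ∈ Ω)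
    {G Y : Matrix (Fin n) (Fin n) ℂ} (hG : G.PosDef) (hY : Y.IsHermitian)
    (hw : ∀ w : Fin n → ℂ, (star (kS u x y *ᵥ w) ⬝ᵥ (G *ᵥ (kS u x y *ᵥ w))).re
      - 2⁻¹ * (star ((kG u x)⁻¹ *ᵥ w) ⬝ᵥ (kG u x *ᵥ ((kG u x)⁻¹ *ᵥ w))).re
      - 2⁻¹ * (star ((kG u y)⁻¹ *ᵥ w) ⬝ᵥ (kG u y *ᵥ ((kG u y)⁻¹ *ᵥ w))).re
      + (star w ⬝ᵥ (Y *ᵥ w)).re ≤ 0) :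
    (G * kS u x y).det.re ≤ Real.exp (-((kS u x y)⁻¹ * Y).trace.re) := by
  have hS := h.pdS hx hy
  refine ke_det_main hG hS ?_
  have hH : (kS u x y - kS u x y * G * kS u x y - Y).IsHermitian := by
    refine (hS.isHermitian.sub ?_).sub hY
    have := (hG.posSemidef.conjTranspose_mul_mul_same (kS u x y)).isHermitian
    rwa [hS.isHermitian.eq] at this
  refine Matrix.PosSemidef.of_dotProduct_mulVec_nonneg hH fun w => ?_
  rw [Complex.le_def]
  refine ⟨?_, (ke_herm_im hH w).symm⟩
  have h1 := hw w
  rw [ke_form_inv (h.pd hx), ke_form_inv (h.pd hy)] at h1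
  have h2 : (star w ⬝ᵥ (kS u x y *ᵥ w)).re = 2⁻¹ * (star w ⬝ᵥ ((kG u x)⁻¹ *ᵥ w)).re
      + 2⁻¹ * (star w ⬝ᵥ ((kG u y)⁻¹ *ᵥ w)).re := by
    rw [kS_mulVec, dotProduct_smul, dotProduct_add, Complex.smul_re, Complex.add_re, smul_eq_mul]
    ring
  rw [Matrix.sub_mulVec, Matrix.sub_mulVec, dotProduct_sub, dotProduct_sub,
    ke_form_conj hS.isHermitian, Complex.sub_re, Complex.sub_re, h2, Complex.zero_re]
  linarith

lemma KeHyp.det_lower (h : KeHyp n Ω u) {x y z : Fin n → ℂ} (hx : x ∈ Ω) (hy : y ∈ Ω)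
    (hz : z ∈ Ω) : Real.exp ((n + 1) * (u z - (u x + u y) / 2)) ≤ (kG u z * kS u x y).det.re := by
  have hS := h.pdS hx hy
  have hd := Complex.lt_def.1 hS.det_pos
  simp only [Complex.zero_re, Complex.zero_im] at hd
  have hs : (kS u x y).det = (((kS u x y).det.re : ℝ) : ℂ) :=
    Complex.ext (by simp) (by simp [← hd.2])
  have hinv : ∀ {p}, p ∈ Ω → ((kG u p)⁻¹).det = ((Real.exp (-((n + 1) * u p)) : ℝ) : ℂ) :=
    fun {p} hp => by
      rw [Matrix.det_nonsing_inv, h.det hp, Ring.inverse_eq_inv', Real.exp_neg, Complex.ofReal_inv]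
  have h1 := ke_det_concave (h.pd hx).inv (h.pd hy).inv (Real.exp_pos _) (Real.exp_pos _)
    (hinv hx) (hinv hy) hd.1 hs hS
  have h2 : Real.exp (-((n + 1) * (u x + u y) / 2)) ≤ (kS u x y).det.re := by
    refine le_of_sq_le_sq ?_ hd.1.le
    refine le_trans (le_of_eq ?_) h1
    rw [← Real.exp_add, ← Real.exp_nat_mul]
    congr 1
    push_cast
    ring
  rw [Matrix.det_mul, h.det hz, Complex.re_ofReal_mul]
  calc _ = Real.exp ((n + 1) * u z) * Real.exp (-((n + 1) * (u x + u y) / 2)) := by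
        rw [← Real.exp_add]; congr 1; ring
    _ ≤ _ := by gcongr

lemma ke_line_mem (hΩ : IsOpen Ω) {x : Fin n → ℂ} (hx : x ∈ Ω) (ξ : Fin n → ℂ) :
    ∀ᶠ t : ℝ in nhds 0, x + t • ξ ∈ Ω := by
  have : Filter.Tendsto (fun t : ℝ => x + t • ξ) (nhds 0) (nhds x) := by
    have hc : Continuous (fun t : ℝ => x + t • ξ) := by fun_prop
    simpa using hc.tendsto 0
  exact this.eventually (hΩ.mem_nhds hx)

lemma KeHyp.step1_max (h : KeHyp n Ω u) {p x y : Fin n → ℂ} {c : ℝ} (hc : 0 < c)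
    (hx : x ∈ Ω) (hy : y ∈ Ω) (hz : p + c • ((2⁻¹ : ℝ) • (x + y) - p) ∈ Ω)
    (hmax : ∀ x' ∈ Ω, ∀ y' ∈ Ω, u (p + c • ((2⁻¹ : ℝ) • (x' + y') - p)) - (u x' + u y') / 2 ≤
      u (p + c • ((2⁻¹ : ℝ) • (x + y) - p)) - (u x + u y) / 2) :
    u (p + c • ((2⁻¹ : ℝ) • (x + y) - p)) - (u x + u y) / 2 ≤ -(2 * n * Real.log c) / (n + 1) := by
  set z := p + c • ((2⁻¹ : ℝ) • (x + y) - p) with hzdef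
  have hsecond : ∀ ξ ζ : Fin n → ℂ, c ^ 2 * kB u z ((2⁻¹ : ℝ) • (ξ + ζ)) ((2⁻¹ : ℝ) • (ξ + ζ))
      - 2⁻¹ * kB u x ξ ξ - 2⁻¹ * kB u y ζ ζ ≤ 0 := fun ξ ζ => by
    set s := (2⁻¹ : ℝ) • (ξ + ζ) with hs
    have h1 := ((keD2_line (h.cd hz) (c • s)).add
      ((keD2_line (h.cd hx) ξ).const_mul (-2⁻¹))).add ((keD2_line (h.cd hy) ζ).const_mul (-2⁻¹))
    have h2 := h1.nonpos_of_isLocalMax (by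
      filter_upwards [ke_line_mem h.op hx ξ, ke_line_mem h.op hy ζ] with t h3 h4
      have h5 := hmax _ h3 _ h4
      have h6 : p + c • ((2⁻¹ : ℝ) • ((x + t • ξ) + (y + t • ζ)) - p) = z + t • (c • s) := by
        rw [hzdef, hs]; module
      rw [h6] at h5
      simp only [zero_smul, add_zero]
      linarith)
    simp only [map_smul, _root_.smul_apply, smul_eq_mul] at h2
    linarith
  have hG : ((c ^ 2 : ℝ) • kG u z).PosDef := by
    have := (h.pd hz).smul (a := ((c ^ 2 : ℝ) : ℂ)) (by
      rw [Complex.lt_def]; simp only [Complex.zero_re, Complex.ofReal_re, Complex.zero_im, Complex.ofReal_im, and_true]; positivity)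
    convert this using 1
    ext i j; simp
  have hcore := h.core hx hy hG (Y := 0) Matrix.isHermitian_zero (fun w => by
    set ξ := (kG u x)⁻¹ *ᵥ w
    set ζ := (kG u y)⁻¹ *ᵥ w
    rw [Matrix.smul_mulVec, dotProduct_smul, Complex.smul_re, ke_form (h.cd hz), ke_form (h.cd hx),
      ke_form (h.cd hy), kS_mulVec]
    have e1 := hsecond ξ ζ
    have e2 := hsecond (I • ξ) (I • ζ)
    have e3 : (2⁻¹ : ℝ) • (I • ξ + I • ζ) = I • ((2⁻¹ : ℝ) • (ξ + ζ)) := by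
      rw [← smul_add, smul_comm]
    rw [e3] at e2
    simp only [smul_eq_mul, Matrix.zero_mulVec, dotProduct_zero, Complex.zero_re]
    linarith)
  have hlow := h.det_lower hx hy hz
  rw [Matrix.mul_zero, Matrix.trace_zero, Complex.zero_re, neg_zero, Real.exp_zero] at hcore
  have e : (((c ^ 2 : ℝ) • kG u z) * kS u x y).det.re = (c ^ 2) ^ n * (kG u z * kS u x y).det.re := by
    have : ((c ^ 2 : ℝ) • kG u z) = ((c ^ 2 : ℝ) : ℂ) • kG u z := by ext i j; simp
    rw [this, Matrix.smul_mul, Matrix.det_smul, Fintype.card_fin, ← Complex.ofReal_pow,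
      Complex.re_ofReal_mul]
  rw [e] at hcore
  have h7 : (c ^ 2) ^ n * Real.exp ((n + 1) * (u z - (u x + u y) / 2)) ≤ 1 :=
    (mul_le_mul_of_nonneg_left hlow (by positivity)).trans hcore
  have h8 : (c ^ 2) ^ n = Real.exp (2 * n * Real.log c) := by
    rw [← pow_mul, ← Real.exp_log (pow_pos hc (2 * n)), Real.log_pow]
    push_cast; rfl
  rw [h8, ← Real.exp_add, Real.exp_le_one_iff] at h7
  rw [le_div_iff₀ (by positivity)]
  linarith

end weak


section conv
variable {n : ℕ} {Ω : Set (Fin n → ℂ)} {u : (Fin n → ℂ) → ℝ}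

lemma KeHyp.mid_mem (h : KeHyp n Ω u) {x y : Fin n → ℂ} (hx : x ∈ Ω) (hy : y ∈ Ω) :
    (2⁻¹ : ℝ) • (x + y) ∈ Ω := by
  rw [smul_add]
  exact h.cvx hx hy (by norm_num) (by norm_num) (by norm_num)

lemma KeHyp.weak1 (h : KeHyp n Ω u) {p : Fin n → ℂ} (hp : p ∈ Ω) {c : ℝ} (hc : 0 < c) (hc1 : c < 1)
    {x y : Fin n → ℂ} (hx : x ∈ Ω) (hy : y ∈ Ω) :
    u (p + c • ((2⁻¹ : ℝ) • (x + y) - p)) - (u x + u y) / 2 ≤ -(2 * n * Real.log c) / (n + 1) := by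
  set T := (fun z => p + c • (z - p)) '' closure Ω with hT
  have hTc : IsCompact T := by
    refine IsCompact.image (Metric.isCompact_of_isClosed_isBounded isClosed_closure h.bdd.closure) ?_
    fun_prop
  have hTΩ : T ⊆ Ω := by
    rintro _ ⟨z, hz, rfl⟩
    have h1 := h.cvx.add_smul_sub_mem_interior' hz (y := p) (by rwa [h.op.interior_eq])
      (t := 1 - c) ⟨by linarith, by linarith⟩
    rw [h.op.interior_eq] at h1
    have h2 : p + c • (z - p) = z + (1 - c) • (p - z) := by module
    show p + c • (z - p) ∈ Ω
    rwa [h2]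
  have hmT : ∀ {x y}, x ∈ Ω → y ∈ Ω → p + c • ((2⁻¹ : ℝ) • (x + y) - p) ∈ T := fun hx hy =>
    ⟨_, subset_closure (h.mid_mem hx hy), rfl⟩
  obtain ⟨M, hM⟩ := hTc.exists_bound_of_continuousOn (h.cont.mono hTΩ)
  have hM' : ∀ z ∈ T, u z ≤ M := fun z hz => (le_abs_self _).trans (hM z hz)
  obtain ⟨m, hm⟩ := h.bddBelow
  set K := {z | z ∈ Ω ∧ u z ≤ 2 * M - m} with hK
  have hKc : IsCompact K := h.compact _
  have hpp : p + c • ((2⁻¹ : ℝ) • (p + p) - p) = p := by module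
  have hpM : u p ≤ M := by
    have := hM' _ (hmT hp hp)
    rwa [hpp] at this
  have hpK : p ∈ K := ⟨hp, by linarith [hm p hp]⟩
  have hcont : ContinuousOn (fun q : (Fin n → ℂ) × (Fin n → ℂ) =>
      u (p + c • ((2⁻¹ : ℝ) • (q.1 + q.2) - p)) - (u q.1 + u q.2) / 2) (K ×ˢ K) := by
    have c1 : ContinuousOn (fun q : (Fin n → ℂ) × (Fin n → ℂ) => u q.1) (K ×ˢ K) :=
      h.cont.comp continuousOn_fst fun q hq => hq.1.1
    have c2 : ContinuousOn (fun q : (Fin n → ℂ) × (Fin n → ℂ) => u q.2) (K ×ˢ K) :=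
      h.cont.comp continuousOn_snd fun q hq => hq.2.1
    have c3 : ContinuousOn (fun q : (Fin n → ℂ) × (Fin n → ℂ) =>
        u (p + c • ((2⁻¹ : ℝ) • (q.1 + q.2) - p))) (K ×ˢ K) :=
      h.cont.comp (by fun_prop) fun q hq => hTΩ (hmT hq.1.1 hq.2.1)
    exact c3.sub ((c1.add c2).div_const 2)
  obtain ⟨q, hq, hqmax⟩ := (hKc.prod hKc).exists_isMaxOn ⟨(p, p), hpK, hpK⟩ hcont
  rw [isMaxOn_iff] at hqmax
  have h0 := hqmax (p, p) (Set.mk_mem_prod hpK hpK)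
  simp only [hpp] at h0
  have hall : ∀ x' ∈ Ω, ∀ y' ∈ Ω, u (p + c • ((2⁻¹ : ℝ) • (x' + y') - p)) - (u x' + u y') / 2 ≤
      u (p + c • ((2⁻¹ : ℝ) • (q.1 + q.2) - p)) - (u q.1 + u q.2) / 2 := fun x' hx' y' hy' => by
    have e1 := hM' _ (hmT hx' hy')
    by_cases k1 : u x' ≤ 2 * M - m
    · by_cases k2 : u y' ≤ 2 * M - m
      · exact hqmax (x', y') (Set.mk_mem_prod ⟨hx', k1⟩ ⟨hy', k2⟩)
      · have := hm x' hx'; linarith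
    · have := hm y' hy'; linarith
  exact (hall x hx y hy).trans (h.step1_max hc hq.1.1 hq.2.1 (hTΩ (hmT hq.1.1 hq.2.1)) hall)

lemma KeHyp.mid (h : KeHyp n Ω u) {x y : Fin n → ℂ} (hx : x ∈ Ω) (hy : y ∈ Ω) :
    u ((2⁻¹ : ℝ) • (x + y)) ≤ (u x + u y) / 2 := by
  have hz := h.mid_mem hx hy
  have hl : Filter.Tendsto (fun c : ℝ => u (x + c • ((2⁻¹ : ℝ) • (x + y) - x)) - (u x + u y) / 2)
      (nhdsWithin 1 (Set.Iio 1)) (nhds (u ((2⁻¹ : ℝ) • (x + y)) - (u x + u y) / 2)) := by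
    refine Filter.Tendsto.sub_const ?_ _
    have hu : ContinuousAt u ((2⁻¹ : ℝ) • (x + y)) := h.cont.continuousAt (h.op.mem_nhds hz)
    refine hu.tendsto.comp (Filter.Tendsto.mono_left ?_ nhdsWithin_le_nhds)
    have : Continuous (fun c : ℝ => x + c • ((2⁻¹ : ℝ) • (x + y) - x)) := by fun_prop
    have := this.tendsto 1
    simpa using this
  have hr : Filter.Tendsto (fun c : ℝ => -(2 * n * Real.log c) / (n + 1))
      (nhdsWithin 1 (Set.Iio 1)) (nhds 0) := by
    have : ContinuousAt (fun c : ℝ => -(2 * n * Real.log c) / (n + 1)) 1 :=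
      ((continuousAt_const.mul (Real.continuousAt_log (by norm_num))).neg).div_const _
    have := this.tendsto
    simp only [Real.log_one, mul_zero, neg_zero, zero_div] at this
    exact this.mono_left nhdsWithin_le_nhds
  have := le_of_tendsto_of_tendsto hl hr (by
    filter_upwards [Ioo_mem_nhdsLT (show (0 : ℝ) < 1 by norm_num)] with c hc
    exact h.weak1 hx hc.1 hc.2 hx hy)
  linarith

/-- general principle: a midpoint bound implies a Hessian bound -/
lemma KeHyp.kB_ge (h : KeHyp n Ω u) {z k : Fin n → ℂ} (hz : z ∈ Ω) {a : ℝ}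
    (hb : ∀ᶠ t : ℝ in nhds 0, u z - (u (z + t • k) + u (z + t • (-k))) / 2 + a * (t * t) ≤ 0) :
    2 * a ≤ kB u z k k := by
  have h1 := (((keD2_line (h.cd hz) k).const_mul (-2⁻¹)).add
    ((keD2_line (h.cd hz) (-k)).const_mul (-2⁻¹))).add
      (((KeD2.lin 1).mul (KeD2.lin 1)).const_mul a)
  have h2 := h1.nonpos_of_isLocalMax (by
    filter_upwards [hb] with t ht
    simp only [zero_smul, add_zero, mul_zero, mul_one]
    linarith)
  simp only [map_neg, _root_.neg_apply, neg_neg] at h2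
  linarith

lemma KeHyp.kB_nonneg (h : KeHyp n Ω u) {z : Fin n → ℂ} (hz : z ∈ Ω) (k : Fin n → ℂ) :
    0 ≤ kB u z k k := by
  have := h.kB_ge (k := k) hz (a := 0) (by
    filter_upwards [ke_line_mem h.op hz k, ke_line_mem h.op hz (-k)] with t h1 h2
    have h3 := h.mid h1 h2
    have h4 : (2⁻¹ : ℝ) • (z + t • k + (z + t • (-k))) = z := by module
    rw [h4] at h3
    linarith)
  linarith

lemma ke_line_deriv (z k : Fin n → ℂ) (t : ℝ) : HasDerivAt (fun t : ℝ => z + t • k) k t := by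
  simpa using ((hasDerivAt_id t).smul_const k).const_add z

lemma KeHyp.line_d1 (h : KeHyp n Ω u) {z k : Fin n → ℂ} (a : ℝ) {t : ℝ} (hm : z + t • k ∈ Ω) :
    HasDerivAt (fun t => u (z + t • k) - a * t ^ 2)
      (fderiv ℝ u (z + t • k) k - a * (2 * t)) t := by
  have h1 : HasDerivAt (fun t : ℝ => u (z + t • k)) (fderiv ℝ u (z + t • k) k) t :=
    ((h.cd hm).differentiableAt (by simp)).hasFDerivAt.comp_hasDerivAt t (ke_line_deriv z k t)
  have h2 : HasDerivAt (fun t : ℝ => a * t ^ 2) (a * (2 * t)) t := by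
    simpa using (hasDerivAt_pow 2 t).const_mul a
  exact h1.sub h2

lemma KeHyp.line_d2 (h : KeHyp n Ω u) {z k : Fin n → ℂ} (a : ℝ) {t : ℝ} (hm : z + t • k ∈ Ω) :
    HasDerivAt (fun t => fderiv ℝ u (z + t • k) k - a * (2 * t))
      (kB u (z + t • k) k k - 2 * a) t := by
  have h0 : HasFDerivAt (fderiv ℝ u) (kB u (z + t • k)) (z + t • k) :=
    (((h.cd hm).fderiv_right (m := 1) (by norm_num)).differentiableAt (by simp)).hasFDerivAt
  have h1 : HasDerivAt (fun t : ℝ => fderiv ℝ u (z + t • k)) (kB u (z + t • k) k) t :=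
    h0.comp_hasDerivAt t (ke_line_deriv z k t)
  have h2 : HasDerivAt (fun t : ℝ => fderiv ℝ u (z + t • k) k) (kB u (z + t • k) k k) t := by
    simpa using h1.clm_apply (hasDerivAt_const t k)
  have h3 : HasDerivAt (fun t : ℝ => a * (2 * t)) (2 * a) t := by
    simpa [mul_comm] using ((hasDerivAt_id t).const_mul 2).const_mul a
  exact h2.sub h3

/-- convexity along a segment where the Hessian in the direction is bounded below -/
lemma KeHyp.line_convex (h : KeHyp n Ω u) {z k : Fin n → ℂ} {a : ℝ} {s : Set ℝ} (hs : Convex ℝ s)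
    (hmem : ∀ t ∈ s, z + t • k ∈ Ω) (hb : ∀ t ∈ s, 2 * a ≤ kB u (z + t • k) k k) :
    ConvexOn ℝ s (fun t => u (z + t • k) - a * t ^ 2) := by
  refine convexOn_of_hasDerivWithinAt2_nonneg (f := fun t => u (z + t • k) - a * t ^ 2)
    (f' := fun t => fderiv ℝ u (z + t • k) k - a * (2 * t))
    (f'' := fun t => kB u (z + t • k) k k - 2 * a) hs
    (fun t ht => (h.line_d1 a (hmem t ht)).continuousAt.continuousWithinAt)
    (fun t ht => (h.line_d1 a (hmem t (interior_subset ht))).hasDerivWithinAt)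
    (fun t ht => (h.line_d2 a (hmem t (interior_subset ht))).hasDerivWithinAt) fun t ht => ?_
  have := hb t (interior_subset ht)
  linarith

lemma KeHyp.convexOn (h : KeHyp n Ω u) : ConvexOn ℝ Ω u := by
  refine ⟨h.cvx, fun x hx y hy a b ha hb hab => ?_⟩
  have hm : ∀ t ∈ Set.Icc (0 : ℝ) 1, x + t • (y - x) ∈ Ω := fun t ht =>
    h.cvx.add_smul_sub_mem hx hy ht
  have h1 := h.line_convex (z := x) (k := y - x) (a := 0) (convex_Icc 0 1) hm
    (fun t ht => by simpa using h.kB_nonneg (hm t ht) (y - x))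
  have h2 := h1.2 (x := 0) (y := 1) (by simp) (by simp) ha hb hab
  simp only [smul_eq_mul, mul_zero, mul_one, zero_add, zero_mul, sub_zero, zero_smul, add_zero,
    one_smul, add_sub_cancel] at h2
  have e : a • x + b • y = x + b • (y - x) := by
    obtain rfl : a = 1 - b := by linarith
    module
  rw [e]; simpa using h2

/-- tangent inequality -/
lemma KeHyp.tangent (h : KeHyp n Ω u) {x y : Fin n → ℂ} (hx : x ∈ Ω) (hy : y ∈ Ω) :
    u x + fderiv ℝ u x (y - x) ≤ u y := by
  have hm : ∀ t ∈ Set.Icc (0 : ℝ) 1, x + t • (y - x) ∈ Ω := fun t ht =>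
    h.cvx.add_smul_sub_mem hx hy ht
  have h1 := h.line_convex (z := x) (k := y - x) (a := 0) (convex_Icc 0 1) hm
    (fun t ht => by simpa using h.kB_nonneg (hm t ht) (y - x))
  have hl : HasDerivAt (fun t : ℝ => x + t • (y - x)) (y - x) 0 := by
    simpa using ((hasDerivAt_id (0 : ℝ)).smul_const (y - x)).const_add x
  have hu : HasFDerivAt u (fderiv ℝ u x) (x + (0 : ℝ) • (y - x)) := by
    simpa using ((h.cd hx).differentiableAt (by simp)).hasFDerivAt
  have hd := hu.comp_hasDerivAt (0 : ℝ) hl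
  have hd' : HasDerivAt (fun t => u (x + t • (y - x)) - 0 * t ^ 2) (fderiv ℝ u x (y - x)) 0 := by
    simpa [Function.comp_def] using hd
  have h2 := h1.le_slope_of_hasDerivAt (x := 0) (y := 1) (by simp) (by simp) one_pos hd'
  simp [slope_def_field] at h2
  rw [map_sub]
  linarith

end conv

section strict1
variable {n : ℕ} {Ω : Set (Fin n → ℂ)} {u : (Fin n → ℂ) → ℝ}

/-- Bregman distance -/
def kpsi (u : (Fin n → ℂ) → ℝ) (z1 z : Fin n → ℂ) : ℝ := u z - u z1 - fderiv ℝ u z1 (z - z1)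

lemma KeHyp.norm_bdd (h : KeHyp n Ω u) : ∃ R : ℝ, 0 < R ∧ ∀ z ∈ Ω, ‖z‖ ≤ R := by
  obtain ⟨R, hR, h2⟩ := h.bdd.exists_pos_norm_le
  exact ⟨R, hR, h2⟩

lemma KeHyp.exists_center (h : KeHyp n Ω u) (hne : Ω.Nonempty) :
    ∃ z1 ∈ Ω, (∀ z ∈ Ω, kq (z - z1) ≤ kpsi u z1 z) ∧ ∃ r : ℝ, 0 < r ∧
      ∀ z, ‖z - z1‖ ≤ 2 * r → z ∈ Ω ∧ ∀ k, kq k ≤ kB u z k k := by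
  obtain ⟨R, hR, hRb⟩ := h.norm_bdd
  have hq : ∀ z ∈ Ω, kq z ≤ n * R ^ 2 := fun z hz => (kq_le_norm_sq z).trans (by
    have := hRb z hz; gcongr)
  obtain ⟨w0, hw0⟩ := hne
  have hw0K : w0 ∈ {z | z ∈ Ω ∧ u z ≤ u w0 + n * R ^ 2} := ⟨hw0, by
    have : (0 : ℝ) ≤ n * R ^ 2 := by positivity
    linarith⟩
  obtain ⟨z1, hz1, hmin⟩ := (h.compact (u w0 + n * R ^ 2)).exists_isMinOn ⟨w0, hw0K⟩
    ((h.cont.mono fun z hz => hz.1).sub kq_continuous.continuousOn)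
  rw [isMinOn_iff] at hmin
  have hmin' : ∀ z ∈ Ω, u z1 - kq z1 ≤ u z - kq z := fun z hz => by
    by_cases k1 : u z ≤ u w0 + n * R ^ 2
    · exact hmin z ⟨hz, k1⟩
    · have e1 : u z1 - kq z1 ≤ u w0 - kq w0 := hmin w0 hw0K
      have e2 := hq z hz
      have e3 := kq_nonneg w0
      linarith
  have hz1 : z1 ∈ Ω := hz1.1
  have hD2 : ∀ k, KeD2 (fun t => kq (z1 + t • k) + (-1) * u (z1 + t • k)) (kq z1 + (-1) * u z1)
      (2 * kip z1 k + (-1) * fderiv ℝ u z1 k) (2 * kq k + (-1) * kB u z1 k k) := fun k =>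
    (keD2_q z1 k).add ((keD2_line (h.cd hz1) k).const_mul (-1))
  have hloc : ∀ k, IsLocalMax (fun t : ℝ => kq (z1 + t • k) + (-1) * u (z1 + t • k)) 0 := fun k => by
    filter_upwards [ke_line_mem h.op hz1 k] with t ht
    have := hmin' _ ht
    simp only [zero_smul, add_zero]
    linarith
  have hB1 : ∀ k, 2 * kq k ≤ kB u z1 k k := fun k => by
    have := (hD2 k).nonpos_of_isLocalMax (hloc k)
    linarith
  have hfd : ∀ k, fderiv ℝ u z1 k = 2 * kip z1 k := fun k => by
    obtain ⟨-, f, hf, hf0, -⟩ := hD2 k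
    have := (hloc k).hasDerivAt_eq_zero hf.self_of_nhds
    rw [hf0] at this
    linarith
  refine ⟨z1, hz1, fun z hz => ?_, ?_⟩
  · have e1 := kq_add_smul z1 (z - z1) 1
    rw [one_smul, add_sub_cancel] at e1
    have e2 := hmin' z hz
    rw [kpsi, hfd]
    linarith
  · have hc : ContinuousAt (kB u) z1 :=
      (ke_kB_contDiffOn h.op h.smooth).continuousOn.continuousAt (h.op.mem_nhds hz1)
    have hc' : ∀ᶠ z in nhds z1, dist (kB u z) (kB u z1) < 1 :=
      (Metric.tendsto_nhds (f := nhds z1) (u := kB u) (a := kB u z1)).1 hc.tendsto 1 one_pos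
    have hev : ∀ᶠ z in nhds z1, z ∈ Ω ∧ dist (kB u z) (kB u z1) < 1 :=
      Filter.Eventually.and (h.op.eventually_mem hz1) hc'
    obtain ⟨ε, hε, hball⟩ := Metric.eventually_nhds_iff.1 hev
    refine ⟨ε / 4, by positivity, fun z hz => ?_⟩
    obtain ⟨m1, m2'⟩ := hball (y := z) (by rw [dist_eq_norm]; linarith)
    have m2 : ‖kB u z - kB u z1‖ < 1 := (dist_eq_norm (kB u z) (kB u z1)).symm.trans_lt m2'
    refine ⟨m1, fun k => ?_⟩
    have e1 := (kB u z - kB u z1).le_opNorm₂ k k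
    have e2 : ‖kB u z - kB u z1‖ * ‖k‖ * ‖k‖ ≤ kq k := by
      refine le_trans ?_ (norm_sq_le_kq k)
      have : ‖kB u z - kB u z1‖ * (‖k‖ * ‖k‖) ≤ 1 * (‖k‖ * ‖k‖) := by gcongr
      linarith [this, sq ‖k‖]
    have e3 := neg_abs_le ((kB u z - kB u z1) k k)
    rw [← Real.norm_eq_abs] at e3
    have e4 : (kB u z - kB u z1) k k = kB u z k k - kB u z1 k k := rfl
    have e5 := hB1 k
    linarith

lemma KeHyp.inner_est (h : KeHyp n Ω u) {z1 : Fin n → ℂ} {r : ℝ} (hr : 0 < r)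
    (hball : ∀ z, ‖z - z1‖ ≤ 2 * r → z ∈ Ω ∧ ∀ k, kq k ≤ kB u z k k) :
    ∃ cI : ℝ, 0 < cI ∧ ∀ z k, ‖z - z1‖ ≤ r → z + k ∈ Ω → z - k ∈ Ω →
      u z - (u (z + k) + u (z - k)) / 2 ≤ -(cI * kq k) := by
  obtain ⟨R, hR, hRb⟩ := h.norm_bdd
  set t0 := r / (R + r) with ht0
  have ht0p : 0 < t0 := by positivity
  have ht01 : t0 ≤ 1 := by rw [ht0, div_le_one (by positivity)]; linarith
  have ht0R : t0 * R ≤ r := by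
    rw [ht0, div_mul_eq_mul_div, div_le_iff₀ (by positivity)]; nlinarith
  refine ⟨t0 / 2, by positivity, fun z k hz h1 h2 => ?_⟩
  have hk : ‖k‖ ≤ R := by
    have e : k = (2⁻¹ : ℝ) • ((z + k) - (z - k)) := by module
    rw [e, norm_smul]
    have e1 := norm_sub_le (z + k) (z - k)
    have e2 := hRb _ h1
    have e3 := hRb _ h2
    rw [Real.norm_of_nonneg (by norm_num)]
    linarith
  have hin : ∀ t ∈ Set.Icc (-t0) t0, ‖z + t • k - z1‖ ≤ 2 * r := fun t ht => by
    have e1 : z + t • k - z1 = (z - z1) + t • k := by module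
    have e2 : ‖t • k‖ ≤ r := by
      rw [norm_smul, Real.norm_eq_abs]
      have : |t| ≤ t0 := abs_le.2 ht
      calc |t| * ‖k‖ ≤ t0 * R := by gcongr
        _ ≤ r := ht0R
    rw [e1]
    have := norm_add_le (z - z1) (t • k)
    linarith
  have hz' : z ∈ Ω := by
    have := (hball z (by linarith)).1
    exact this
  have hc := h.line_convex (z := z) (k := k) (a := kq k / 2) (convex_Icc (-t0) t0)
    (fun t ht => (hball _ (hin t ht)).1) (fun t ht => by
      have := (hball _ (hin t ht)).2 k
      linarith)
  have h3 := hc.2 (x := -t0) (y := t0) ⟨le_refl _, by linarith⟩ ⟨by linarith, le_refl _⟩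
    (show (0 : ℝ) ≤ 2⁻¹ by norm_num) (show (0 : ℝ) ≤ 2⁻¹ by norm_num) (by norm_num)
  have e0 : (2⁻¹ : ℝ) • (-t0) + (2⁻¹ : ℝ) • t0 = 0 := by simp
  rw [e0] at h3
  simp only [zero_smul, add_zero, smul_eq_mul] at h3
  have h4 := h.convexOn.2 hz' h1 (show 0 ≤ 1 - t0 by linarith) ht0p.le (by ring)
  have h5 := h.convexOn.2 hz' h2 (show 0 ≤ 1 - t0 by linarith) ht0p.le (by ring)
  have e4 : (1 - t0) • z + t0 • (z + k) = z + t0 • k := by module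
  have e5 : (1 - t0) • z + t0 • (z - k) = z + (-t0) • k := by module
  rw [e4, smul_eq_mul, smul_eq_mul] at h4
  rw [e5, smul_eq_mul, smul_eq_mul] at h5
  have h6 : t0 * (u z - (u (z + k) + u (z - k)) / 2) ≤ t0 * -(t0 / 2 * kq k) := by
    nlinarith
  exact le_of_mul_le_mul_left h6 ht0p

lemma KeHyp.kG_cont (h : KeHyp n Ω u) : ContinuousOn (kG u) Ω := by
  refine continuousOn_pi.2 fun i => continuousOn_pi.2 fun j => ?_
  exact (ke_kG_contDiffOn h.op h.smooth i j).continuousOn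

lemma KeHyp.kS_cont (h : KeHyp n Ω u) : ContinuousOn
    (fun q : (Fin n → ℂ) × (Fin n → ℂ) => kS u q.1 q.2) (Ω ×ˢ Ω) := by
  have hinv : ContinuousOn (fun z => (kG u z)⁻¹) Ω :=
    ke_inv_continuousOn h.kG_cont fun z hz => (ke_isUnit_det (h.pd hz)).ne_zero
  have c1 : ContinuousOn (fun q : (Fin n → ℂ) × (Fin n → ℂ) => (kG u q.1)⁻¹) (Ω ×ˢ Ω) :=
    hinv.comp (f := fun q : (Fin n → ℂ) × (Fin n → ℂ) => q.1)
      continuousOn_fst fun q hq => hq.1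
  have c2 : ContinuousOn (fun q : (Fin n → ℂ) × (Fin n → ℂ) => (kG u q.2)⁻¹) (Ω ×ˢ Ω) :=
    hinv.comp (f := fun q : (Fin n → ℂ) × (Fin n → ℂ) => q.2)
      continuousOn_snd fun q hq => hq.2
  exact (c1.add c2).const_smul (2⁻¹ : ℂ)

lemma KeHyp.kSinv_cont (h : KeHyp n Ω u) : ContinuousOn
    (fun q : (Fin n → ℂ) × (Fin n → ℂ) => (kS u q.1 q.2)⁻¹) (Ω ×ˢ Ω) :=
  ke_inv_continuousOn h.kS_cont fun _ hq => (ke_isUnit_det (h.pdS hq.1 hq.2)).ne_zero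

lemma KeHyp.kX_cont (h : KeHyp n Ω u) (z1 : Fin n → ℂ) : ContinuousOn
    (fun z => kX (fderiv ℝ u z - fderiv ℝ u z1)) Ω := by
  have c0 : ContinuousOn (fderiv ℝ u) Ω :=
    h.smooth.continuousOn_fderiv_of_isOpen h.op (by simp)
  exact kX_continuous.comp_continuousOn (c0.sub continuousOn_const)

lemma ke_trace_cont {X : Type*} [TopologicalSpace X] {s : Set X}
    {f : X → Matrix (Fin n) (Fin n) ℂ} (hf : ContinuousOn f s) :
    ContinuousOn (fun q => (f q).trace.re) s := by
  have ct : Continuous (fun M : Matrix (Fin n) (Fin n) ℂ => M.trace.re) :=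
    Complex.continuous_re.comp continuous_id.matrix_trace
  exact ct.comp_continuousOn hf

lemma ke_trace_mul_cont {X : Type*} [TopologicalSpace X] {s : Set X}
    {f g : X → Matrix (Fin n) (Fin n) ℂ} (hf : ContinuousOn f s) (hg : ContinuousOn g s) :
    ContinuousOn (fun q => (f q * g q).trace.re) s :=
  ke_trace_cont (hf.mul hg)

lemma KeHyp.D_pos (h : KeHyp n Ω u) {z z1 : Fin n → ℂ} (hz1 : z1 ∈ Ω) (hz : z ∈ Ω)
    (hpsi : kq (z - z1) ≤ kpsi u z1 z) (hne : z ≠ z1) :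
    0 < (fderiv ℝ u z - fderiv ℝ u z1) (z - z1) := by
  have e2 := h.tangent hz hz1
  have e3 : 0 < kq (z - z1) := kq_pos (sub_ne_zero.2 hne)
  rw [kpsi] at hpsi
  have e4 : fderiv ℝ u z (z1 - z) = - fderiv ℝ u z (z - z1) := by
    rw [← map_neg, neg_sub]
  rw [e4] at e2
  rw [_root_.sub_apply]
  linarith

lemma KeHyp.constants (h : KeHyp n Ω u) {K : Set (Fin n → ℂ)} (hK : IsCompact K) (hKΩ : K ⊆ Ω)
    {z1 : Fin n → ℂ} (hz1 : z1 ∈ Ω) (hpsi : ∀ z ∈ Ω, kq (z - z1) ≤ kpsi u z1 z) {r : ℝ} (hr : 0 < r) :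
    ∃ c0 C1 : ℝ, 0 < c0 ∧ 0 ≤ C1 ∧ ∀ x ∈ K, ∀ y ∈ K, ∀ z ∈ K, r ≤ ‖z - z1‖ →
      c0 ≤ (kX (fderiv ℝ u z - fderiv ℝ u z1) * kS u x y).trace.re ∧
      (kG u z * kS u x y).trace.re ≤ C1 ∧ ((kS u x y)⁻¹).trace.re ≤ C1 := by
  set A := K ∩ {z | r ≤ ‖z - z1‖} with hA
  have hAc : IsCompact A := hK.inter_right (isClosed_le continuous_const (by fun_prop))
  have hAΩ : A ⊆ Ω := fun z hz => hKΩ hz.1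
  have hBc : IsCompact ((K ×ˢ K) ×ˢ A) := (hK.prod hK).prod hAc
  have cS : ContinuousOn (fun q : ((Fin n → ℂ) × (Fin n → ℂ)) × (Fin n → ℂ) => kS u q.1.1 q.1.2)
      ((K ×ˢ K) ×ˢ A) :=
    h.kS_cont.comp (f := fun q : ((Fin n → ℂ) × (Fin n → ℂ)) × (Fin n → ℂ) => q.1)
      continuousOn_fst fun q hq => Set.mk_mem_prod (hKΩ hq.1.1) (hKΩ hq.1.2)
  have cG : ContinuousOn (fun q : ((Fin n → ℂ) × (Fin n → ℂ)) × (Fin n → ℂ) => kG u q.2)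
      ((K ×ˢ K) ×ˢ A) :=
    h.kG_cont.comp (f := fun q : ((Fin n → ℂ) × (Fin n → ℂ)) × (Fin n → ℂ) => q.2)
      continuousOn_snd fun q hq => hAΩ hq.2
  have cD : ContinuousOn (fun q : ((Fin n → ℂ) × (Fin n → ℂ)) × (Fin n → ℂ) =>
      kX (fderiv ℝ u q.2 - fderiv ℝ u z1)) ((K ×ˢ K) ×ˢ A) :=
    (h.kX_cont z1).comp (f := fun q : ((Fin n → ℂ) × (Fin n → ℂ)) × (Fin n → ℂ) => q.2)
      continuousOn_snd fun q hq => hAΩ hq.2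
  obtain ⟨c0, hc0, hc0b⟩ := hBc.exists_forall_le' (ke_trace_mul_cont cD cS) (a := 0) (fun q hq => by
    refine kX_trace_pos (w := q.2 - z1) (ne_of_gt ?_) (h.pdS (hKΩ hq.1.1) (hKΩ hq.1.2))
    refine h.D_pos hz1 (hAΩ hq.2) (hpsi _ (hAΩ hq.2)) fun h0 => ?_
    have : r ≤ ‖q.2 - z1‖ := hq.2.2
    rw [h0, sub_self, norm_zero] at this
    linarith)
  obtain ⟨a1, ha1⟩ := hBc.exists_bound_of_continuousOn (ke_trace_mul_cont cG cS)
  obtain ⟨a2, ha2⟩ := (hK.prod hK).exists_bound_of_continuousOn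
    (ke_trace_cont (h.kSinv_cont.mono (Set.prod_mono hKΩ hKΩ)))
  refine ⟨c0, max 0 (max a1 a2), hc0, le_max_left _ _, fun x hx y hy z hz hrz => ?_⟩
  have hq : ((x, y), z) ∈ (K ×ˢ K) ×ˢ A := Set.mk_mem_prod (Set.mk_mem_prod hx hy) ⟨hz, hrz⟩
  have e1 := hc0b ((x, y), z) hq
  have e2 := (Real.le_norm_self _).trans (ha1 ((x, y), z) hq)
  have e3 := (Real.le_norm_self _).trans (ha2 (x, y) (Set.mk_mem_prod hx hy))
  have m1 : a1 ≤ max 0 (max a1 a2) := (le_max_left a1 a2).trans (le_max_right _ _)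
  have m2 : a2 ≤ max 0 (max a1 a2) := (le_max_right a1 a2).trans (le_max_right _ _)
  exact ⟨e1, e2.trans m1, e3.trans m2⟩

end strict1

section strict2
variable {n : ℕ} {Ω : Set (Fin n → ℂ)} {u : (Fin n → ℂ) → ℝ}

lemma KeHyp.psi_D2 (h : KeHyp n Ω u) (z1 : Fin n → ℂ) {z : Fin n → ℂ} (hz : z ∈ Ω) (s : Fin n → ℂ) :
    KeD2 (fun t => kpsi u z1 (z + t • s)) (kpsi u z1 z) ((fderiv ℝ u z - fderiv ℝ u z1) s)
      (kB u z s s) := by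
  have h1 := ((keD2_line (h.cd hz) s).add (KeD2.const (-u z1 - fderiv ℝ u z1 (z - z1)))).add
    (KeD2.lin (-fderiv ℝ u z1 s))
  have e : (fun t : ℝ => kpsi u z1 (z + t • s)) = fun t =>
      u (z + t • s) + (-u z1 - fderiv ℝ u z1 (z - z1)) + t * (-fderiv ℝ u z1 s) := by
    funext t
    have : z + t • s - z1 = (z - z1) + t • s := by module
    rw [kpsi, this, map_add, map_smul, smul_eq_mul]; ring
  rw [e]
  refine h1.congr ?_ ?_ ?_
  · rw [kpsi]; ring
  · rw [_root_.sub_apply]; ring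
  · ring

/-- the barrier functional -/
def kPhi (u : (Fin n → ℂ) → ℝ) (z1 : Fin n → ℂ) (α δ T : ℝ) (x y : Fin n → ℂ) : ℝ :=
  u ((2⁻¹ : ℝ) • (x + y)) - (u x + u y) / 2 +
    δ * ((Real.exp (-α * kpsi u z1 ((2⁻¹ : ℝ) • (x + y))) - Real.exp (-α * T)) *
      kq ((2⁻¹ : ℝ) • (x - y)))

lemma KeHyp.second (h : KeHyp n Ω u) {z1 x y : Fin n → ℂ} {α δ T : ℝ}
    (hx : x ∈ Ω) (hy : y ∈ Ω)
    (hmax : ∀ x' ∈ Ω, ∀ y' ∈ Ω, kPhi u z1 α δ T x' y' ≤ kPhi u z1 α δ T x y)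
    {z k ξ ζ s d : Fin n → ℂ} (hz : z = (2⁻¹ : ℝ) • (x + y)) (hk : k = (2⁻¹ : ℝ) • (x - y))
    (hs : s = (2⁻¹ : ℝ) • (ξ + ζ)) (hd : d = (2⁻¹ : ℝ) • (ξ - ζ)) :
    kB u z s s - 2⁻¹ * kB u x ξ ξ - 2⁻¹ * kB u y ζ ζ
      + δ * (Real.exp (-α * kpsi u z1 z) * (α ^ 2 * ((fderiv ℝ u z - fderiv ℝ u z1) s) ^ 2
        - α * kB u z s s) * kq k
        + 2 * (Real.exp (-α * kpsi u z1 z) * (-α * (fderiv ℝ u z - fderiv ℝ u z1) s) * (2 * kip k d))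
        + (Real.exp (-α * kpsi u z1 z) - Real.exp (-α * T)) * (2 * kq d)) ≤ 0 := by
  have hzΩ : z ∈ Ω := hz ▸ h.mid_mem hx hy
  have h1 := (((keD2_line (h.cd hzΩ) s).add
      ((keD2_line (h.cd hx) ξ).const_mul (-2⁻¹))).add ((keD2_line (h.cd hy) ζ).const_mul (-2⁻¹))).add
      (((((h.psi_D2 z1 hzΩ s).const_mul (-α)).exp.add (KeD2.const (-Real.exp (-α * T)))).mul
        (keD2_q k d)).const_mul δ)
  have h2 := h1.nonpos_of_isLocalMax (by
    filter_upwards [ke_line_mem h.op hx ξ, ke_line_mem h.op hy ζ] with t h3 h4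
    have h5 := hmax _ h3 _ h4
    have h6 : (2⁻¹ : ℝ) • ((x + t • ξ) + (y + t • ζ)) = z + t • s := by
      rw [hz, hs]; module
    have h7 : (2⁻¹ : ℝ) • ((x + t • ξ) - (y + t • ζ)) = k + t • d := by
      rw [hk, hd]; module
    rw [kPhi, kPhi, h6, h7, ← hz, ← hk] at h5
    simp only [zero_smul, add_zero]
    linarith)
  generalize (fderiv ℝ u z - fderiv ℝ u z1) s = Ds at h2 ⊢
  linarith

lemma ke_cross {K D1 D2 b1 b2 q : ℝ} (hK : 0 < K) (hb : b1 ^ 2 + b2 ^ 2 ≤ K * q) :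
    2 * (D1 * b1 + D2 * b2) ≤ K * (D1 ^ 2 + D2 ^ 2) + q := by
  have h1 : K * (2 * (D1 * b1 + D2 * b2)) ≤ K * (K * (D1 ^ 2 + D2 ^ 2) + q) := by
    nlinarith [sq_nonneg (K * D1 - b1), sq_nonneg (K * D2 - b2)]
  exact le_of_mul_le_mul_left h1 hK

/-- scalar bookkeeping -/
lemma ke_scalar {Bz Bz' X X' Y Y' δ e α K D1 D2 b1 b2 hh q q' : ℝ} (hδ : 0 ≤ δ) (he : 0 ≤ e)
    (hα : 0 ≤ α) (hK : 0 < K) (hh0 : 0 ≤ hh) (hq : 0 ≤ q) (hb : b1 ^ 2 + b2 ^ 2 ≤ K * q)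
    (hqq : q ≤ K * q')
    (h1 : Bz - 2⁻¹ * X - 2⁻¹ * Y + δ * (e * (α ^ 2 * D1 ^ 2 - α * Bz) * K
      + 2 * (e * (-α * D1) * (2 * b1)) + hh * (2 * q)) ≤ 0)
    (h2 : Bz' - 2⁻¹ * X' - 2⁻¹ * Y' + δ * (e * (α ^ 2 * D2 ^ 2 - α * Bz') * K
      + 2 * (e * (-α * D2) * (2 * b2)) + hh * (2 * q)) ≤ 0) :
    (Bz + Bz') / 4 - 2⁻¹ * ((X + X') / 4) - 2⁻¹ * ((Y + Y') / 4)
      + (δ * e * K) * ((α ^ 2 - 2 * α) * ((D1 ^ 2 + D2 ^ 2) / 4) - α * ((Bz + Bz') / 4)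
        - α / 2 * q') ≤ 0 := by
  have hc := ke_cross (D1 := D1) (D2 := D2) hK hb
  have hc2 : 2 * (D1 * b1 + D2 * b2) ≤ K * (D1 ^ 2 + D2 ^ 2) + K * q' := hc.trans (by linarith)
  have hp : 0 ≤ δ * e * α := by positivity
  have h3 := mul_le_mul_of_nonneg_left hc2 hp
  have h4 : 0 ≤ δ * (hh * q) := by positivity
  nlinarith

/-- determinant estimate at a maximum of the barrier functional -/
lemma KeHyp.barrier_det (h : KeHyp n Ω u) {z1 x y : Fin n → ℂ} {α δ T L : ℝ}
    (hx : x ∈ Ω) (hy : y ∈ Ω) (hδ : 0 ≤ δ) (hα : 0 ≤ α)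
    (hmax : ∀ x' ∈ Ω, ∀ y' ∈ Ω, kPhi u z1 α δ T x' y' ≤ kPhi u z1 α δ T x y)
    {z k : Fin n → ℂ} (hz : z = (2⁻¹ : ℝ) • (x + y)) (hk : k = (2⁻¹ : ℝ) • (x - y)) (hk0 : k ≠ 0)
    (hh : 0 ≤ Real.exp (-α * kpsi u z1 z) - Real.exp (-α * T)) (hL0 : 0 ≤ L)
    (hL : ∀ w, kq (((kG u x)⁻¹ - (kG u y)⁻¹) *ᵥ w) ≤ L * ‖x - y‖ ^ 2 * kq w) :
    (n + 1) * (u z - (u x + u y) / 2) ≤ -((δ * Real.exp (-α * kpsi u z1 z) * kq k) *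
      ((α ^ 2 - 2 * α) * (kX (fderiv ℝ u z - fderiv ℝ u z1) * kS u x y).trace.re
        - α * (kG u z * kS u x y).trace.re - α / 2 * L * ((kS u x y)⁻¹).trace.re)) := by
  have hzΩ : z ∈ Ω := hz ▸ h.mid_mem hx hy
  set D := fderiv ℝ u z - fderiv ℝ u z1 with hD
  set κ := δ * Real.exp (-α * kpsi u z1 z) * kq k with hκ
  set S := kS u x y with hS
  have hSp : S.PosDef := h.pdS hx hy
  have hSh := hSp.isHermitian
  have hXh : (kX D).IsHermitian := by
    rw [Matrix.IsHermitian, kX, Matrix.conjTranspose_vecMulVec, star_star]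
  have conj_herm : ∀ {G : Matrix (Fin n) (Fin n) ℂ}, G.IsHermitian → (S * G * S).IsHermitian :=
    fun {G} hG => by
      rw [Matrix.IsHermitian, Matrix.conjTranspose_mul, Matrix.conjTranspose_mul, hSh.eq, hG.eq,
        Matrix.mul_assoc]
  have smul_herm : ∀ (c : ℝ) {G : Matrix (Fin n) (Fin n) ℂ}, G.IsHermitian → ((c : ℂ) • G).IsHermitian :=
    fun c {G} hG => by
      rw [Matrix.IsHermitian, Matrix.conjTranspose_smul, hG.eq]; simp
  set Y : Matrix (Fin n) (Fin n) ℂ := ((κ * (α ^ 2 - 2 * α) : ℝ) : ℂ) • (S * kX D * S)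
    + ((-(κ * α) : ℝ) : ℂ) • (S * kG u z * S) + ((-(κ * (α / 2 * L)) : ℝ) : ℂ) • 1 with hY
  have hYh : Y.IsHermitian :=
    ((smul_herm _ (conj_herm hXh)).add (smul_herm _ (conj_herm (h.pd hzΩ).isHermitian))).add
      (smul_herm _ Matrix.isHermitian_one)
  have hkp : 0 < kq k := kq_pos hk0
  have hcore := h.core hx hy (h.pd hzΩ) hYh (fun w => by
    set ξ := (kG u x)⁻¹ *ᵥ w with hξ
    set ζ := (kG u y)⁻¹ *ᵥ w with hζ
    set s := (2⁻¹ : ℝ) • (ξ + ζ) with hs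
    set d := (2⁻¹ : ℝ) • (ξ - ζ) with hd
    have hSw : kS u x y *ᵥ w = s := kS_mulVec x y w
    have hYw : (star w ⬝ᵥ (Y *ᵥ w)).re = κ * (α ^ 2 - 2 * α) * ((D s ^ 2 + D (I • s) ^ 2) / 4)
        - κ * α * ((kB u z s s + kB u z (I • s) (I • s)) / 4) - κ * (α / 2 * L) * kq w := by
      rw [hY, Matrix.add_mulVec, Matrix.add_mulVec, Matrix.smul_mulVec, Matrix.smul_mulVec,
        Matrix.smul_mulVec, Matrix.one_mulVec, dotProduct_add, dotProduct_add, dotProduct_smul,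
        dotProduct_smul, dotProduct_smul, ke_form_conj hSh, ke_form_conj hSh, hS, hSw]
      simp only [smul_eq_mul, Complex.add_re, Complex.re_ofReal_mul]
      rw [kX_form, ke_form (h.cd hzΩ), ← kq_eq_dot]
      ring
    rw [hYw, hSw, ke_form (h.cd hzΩ), ke_form (h.cd hx), ke_form (h.cd hy)]
    have e1 := h.second hx hy hmax hz hk hs hd
    have e2 := h.second hx hy hmax hz hk (ξ := I • ξ) (ζ := I • ζ) (s := I • s) (d := I • d)
      (by rw [hs, ← smul_add, smul_comm]) (by rw [hd, ← smul_sub, smul_comm])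
    rw [kq_I] at e2
    have hqd : kq d ≤ kq k * (L * kq w) := by
      have e3 := hL w
      rw [Matrix.sub_mulVec, ← hξ, ← hζ] at e3
      have e4 : kq d = 4⁻¹ * kq (ξ - ζ) := by
        have := kq_add_smul 0 (ξ - ζ) 2⁻¹
        rw [zero_add, kq_zero] at this
        rw [hd, this]
        simp [kip]
        ring
      have e5 : ‖x - y‖ ^ 2 = 4 * ‖k‖ ^ 2 := by
        rw [hk, norm_smul, Real.norm_of_nonneg (by norm_num)]; ring
      have e6 := norm_sq_le_kq k
      have e7 : L * ‖x - y‖ ^ 2 * kq w ≤ L * (4 * kq k) * kq w := by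
        have := kq_nonneg w
        rw [e5]; gcongr
      linarith
    have := ke_scalar hδ (Real.exp_pos _).le hα hkp hh (kq_nonneg d) (kip_cs k d) hqd e1 e2
    rw [← hκ] at this
    linarith)
  have hlow := (h.det_lower hx hy hzΩ).trans hcore
  rw [Real.exp_le_exp] at hlow
  refine hlow.trans (le_of_eq ?_)
  have hu := ke_isUnit_det hSp
  have t1 : ∀ G : Matrix (Fin n) (Fin n) ℂ, S⁻¹ * (S * G * S) = G * S := fun G => by
    rw [Matrix.mul_assoc S, ← Matrix.mul_assoc, Matrix.nonsing_inv_mul _ hu, one_mul]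
  rw [← hS, hY, mul_add, mul_add, Matrix.mul_smul, Matrix.mul_smul, Matrix.mul_smul, t1, t1, mul_one,
    Matrix.trace_add, Matrix.trace_add, Matrix.trace_smul, Matrix.trace_smul, Matrix.trace_smul]
  simp only [smul_eq_mul, Complex.add_re, Complex.re_ofReal_mul]
  ring

end strict2

section strict3
variable {n : ℕ} {Ω : Set (Fin n → ℂ)} {u : (Fin n → ℂ) → ℝ}

lemma KeHyp.kPhi_cont (h : KeHyp n Ω u) (z1 : Fin n → ℂ) (α δ T : ℝ) :
    ContinuousOn (fun q : (Fin n → ℂ) × (Fin n → ℂ) => kPhi u z1 α δ T q.1 q.2) (Ω ×ˢ Ω) := by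
  have c1 : ContinuousOn (fun q : (Fin n → ℂ) × (Fin n → ℂ) => u q.1) (Ω ×ˢ Ω) :=
    h.cont.comp continuousOn_fst fun q hq => hq.1
  have c2 : ContinuousOn (fun q : (Fin n → ℂ) × (Fin n → ℂ) => u q.2) (Ω ×ˢ Ω) :=
    h.cont.comp continuousOn_snd fun q hq => hq.2
  have c3 : ContinuousOn (fun q : (Fin n → ℂ) × (Fin n → ℂ) => u ((2⁻¹ : ℝ) • (q.1 + q.2)))
      (Ω ×ˢ Ω) :=
    h.cont.comp (f := fun q : (Fin n → ℂ) × (Fin n → ℂ) => (2⁻¹ : ℝ) • (q.1 + q.2))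
      (by fun_prop) fun q hq => h.mid_mem hq.1 hq.2
  have c4 : ContinuousOn (fun q : (Fin n → ℂ) × (Fin n → ℂ) =>
      kpsi u z1 ((2⁻¹ : ℝ) • (q.1 + q.2))) (Ω ×ˢ Ω) := by
    unfold kpsi
    exact (c3.sub continuousOn_const).sub (by fun_prop)
  have c5 : ContinuousOn (fun q : (Fin n → ℂ) × (Fin n → ℂ) =>
      kq ((2⁻¹ : ℝ) • (q.1 - q.2))) (Ω ×ˢ Ω) :=
    kq_continuous.comp_continuousOn (by fun_prop)
  unfold kPhi
  exact (c3.sub ((c1.add c2).div_const 2)).add (continuousOn_const.mul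
    (((continuousOn_const.mul c4).rexp.sub continuousOn_const).mul c5))

lemma ke_ineq {N C1 L c0 α : ℝ} (hN : 0 ≤ N) (hC1 : 0 ≤ C1) (hL : 0 ≤ L) (hc0 : 0 < c0)
    (hα : α = 2 + (N + C1 + L * C1 / 2) / c0) {a b c : ℝ} (ha : c0 ≤ a) (hb : b ≤ C1) (hc : c ≤ C1) :
    N ≤ (α ^ 2 - 2 * α) * a - α * b - α / 2 * L * c := by
  have hα2 : 2 ≤ α := by
    have : 0 ≤ (N + C1 + L * C1 / 2) / c0 := by positivity
    linarith
  have e : (α - 2) * c0 = N + C1 + L * C1 / 2 := by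
    rw [hα]; field_simp; ring
  have h1 : α * (N + C1 + L * C1 / 2) ≤ (α ^ 2 - 2 * α) * a := by
    have : α * ((α - 2) * c0) ≤ α * ((α - 2) * a) := by
      have : 0 ≤ α - 2 := by linarith
      gcongr
    rw [e] at this
    linarith
  have h2 : α * b ≤ α * C1 := by gcongr
  have h3 : α / 2 * L * c ≤ α / 2 * L * C1 := by gcongr
  nlinarith

lemma KeHyp.claim (h : KeHyp n Ω u) {z1 : Fin n → ℂ} (hz1 : z1 ∈ Ω)
    (hpsi : ∀ z ∈ Ω, kq (z - z1) ≤ kpsi u z1 z) {r : ℝ} (hr : 0 < r)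
    (hball : ∀ z, ‖z - z1‖ ≤ 2 * r → z ∈ Ω ∧ ∀ k, kq k ≤ kB u z k k) (T : ℝ) :
    ∃ α δ : ℝ, 0 < α ∧ 0 < δ ∧ ∀ x ∈ Ω, ∀ y ∈ Ω, kPhi u z1 α δ T x y ≤ 0 := by
  obtain ⟨cI, hcI, hinner⟩ := h.inner_est hr hball
  obtain ⟨R, hR, hRb⟩ := h.norm_bdd
  obtain ⟨m, hm⟩ := h.bddBelow
  obtain ⟨M1, hM1⟩ : ∃ M1 : ℝ, ∀ z ∈ Ω, kpsi u z1 z < T → u z ≤ M1 := by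
    refine ⟨T + u z1 + ‖fderiv ℝ u z1‖ * (R + R), fun z hz hT => ?_⟩
    have e1 := (Real.le_norm_self _).trans ((fderiv ℝ u z1).le_opNorm (z - z1))
    have e2 : ‖z - z1‖ ≤ R + R := (norm_sub_le _ _).trans (add_le_add (hRb z hz) (hRb z1 hz1))
    have e3 : ‖fderiv ℝ u z1‖ * ‖z - z1‖ ≤ ‖fderiv ℝ u z1‖ * (R + R) := by gcongr
    rw [kpsi] at hT
    linarith
  set M2 := 2 * M1 + 2 - m with hM2
  set K := {z | z ∈ Ω ∧ u z ≤ M2} with hKdef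
  have hK : IsCompact K := h.compact M2
  have hKΩ : K ⊆ Ω := fun z hz => hz.1
  have hKc : Convex ℝ K := h.convexOn.convex_le M2
  obtain ⟨L, hL0, hL⟩ := ke_lipschitz hK hKc (P := fun z => (kG u z)⁻¹) (fun i j =>
    (ke_inv_contDiffOn (fun i j => ke_kG_contDiffOn h.op h.smooth i j)
      (fun z hz => (ke_isUnit_det (h.pd hz)).ne_zero) i j).mono hKΩ)
  obtain ⟨c0, C1, hc0, hC1, hcst⟩ := h.constants hK hKΩ hz1 hpsi hr
  obtain ⟨α, hα⟩ : ∃ α : ℝ, α = 2 + (((n : ℝ) + 1) + C1 + L * C1 / 2) / c0 := ⟨_, rfl⟩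
  have hαp : 0 < α := by
    have : 0 ≤ (((n : ℝ) + 1) + C1 + L * C1 / 2) / c0 := by positivity
    linarith
  obtain ⟨δ, hδ, hδ1, hδ2⟩ : ∃ δ : ℝ, 0 < δ ∧ δ * (n * R ^ 2) ≤ 1 ∧ δ ≤ cI := by
    refine ⟨min (1 / (n * R ^ 2 + 1)) cI, lt_min (by positivity) hcI, ?_, min_le_right _ _⟩
    have e1 : min (1 / (n * R ^ 2 + 1)) cI * (n * R ^ 2) ≤ 1 / (n * R ^ 2 + 1) * (n * R ^ 2) := by
      gcongr; exact min_le_left _ _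
    refine e1.trans ?_
    rw [one_div_mul_eq_div, div_le_one (by positivity)]
    linarith
  refine ⟨α, δ, hαp, hδ, ?_⟩
  -- bounds on the barrier
  have hh1 : ∀ z ∈ Ω, Real.exp (-α * kpsi u z1 z) - Real.exp (-α * T) ≤ 1 := fun z hz => by
    have e1 := (kq_nonneg _).trans (hpsi z hz)
    have e2 : Real.exp (-α * kpsi u z1 z) ≤ 1 := by
      rw [Real.exp_le_one_iff]; nlinarith
    have e3 := Real.exp_pos (-α * T)
    linarith
  have hkR : ∀ x ∈ Ω, ∀ y ∈ Ω, kq ((2⁻¹ : ℝ) • (x - y)) ≤ n * R ^ 2 := fun x hx y hy => by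
    refine (kq_le_norm_sq _).trans ?_
    have : ‖(2⁻¹ : ℝ) • (x - y)‖ ≤ R := by
      rw [norm_smul, Real.norm_of_nonneg (by norm_num)]
      have e1 := norm_sub_le x y
      have e2 := hRb _ hx
      have e3 := hRb _ hy
      linarith
    gcongr
  have key : ∀ x ∈ Ω, ∀ y ∈ Ω, 0 < kPhi u z1 α δ T x y →
      0 < Real.exp (-α * kpsi u z1 ((2⁻¹ : ℝ) • (x + y))) - Real.exp (-α * T) ∧ x ∈ K ∧ y ∈ K := by
    intro x hx y hy hpos
    have hz := h.mid_mem hx hy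
    have hmid := h.mid hx hy
    have h1 := hh1 _ hz
    have h2 := hkR x hx y hy
    have h3 := kq_nonneg ((2⁻¹ : ℝ) • (x - y))
    rw [kPhi] at hpos
    have hh0 : 0 < Real.exp (-α * kpsi u z1 ((2⁻¹ : ℝ) • (x + y))) - Real.exp (-α * T) := by
      by_contra hcon
      have : (Real.exp (-α * kpsi u z1 ((2⁻¹ : ℝ) • (x + y))) - Real.exp (-α * T)) *
        kq ((2⁻¹ : ℝ) • (x - y)) ≤ 0 := mul_nonpos_of_nonpos_of_nonneg (not_lt.1 hcon) h3
      have := mul_nonpos_of_nonneg_of_nonpos hδ.le this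
      linarith
    have hψT : kpsi u z1 ((2⁻¹ : ℝ) • (x + y)) < T := by
      have := Real.exp_lt_exp.1 (sub_pos.1 hh0)
      nlinarith
    have huz := hM1 _ hz hψT
    have h4 : δ * ((Real.exp (-α * kpsi u z1 ((2⁻¹ : ℝ) • (x + y))) - Real.exp (-α * T)) *
        kq ((2⁻¹ : ℝ) • (x - y))) ≤ 1 := by
      refine le_trans (mul_le_mul_of_nonneg_left ?_ hδ.le) hδ1
      calc _ ≤ 1 * kq ((2⁻¹ : ℝ) • (x - y)) := by gcongr
        _ ≤ _ := by linarith
    have h5 := hm x hx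
    have h6 := hm y hy
    exact ⟨hh0, ⟨hx, by linarith⟩, ⟨hy, by linarith⟩⟩
  intro x' hx' y' hy'
  by_contra hcon
  have hpos' : 0 < kPhi u z1 α δ T x' y' := not_le.1 hcon
  obtain ⟨-, hx'K, hy'K⟩ := key x' hx' y' hy' hpos'
  obtain ⟨q, hq, hqmax⟩ := (hK.prod hK).exists_isMaxOn ⟨(x', y'), Set.mk_mem_prod hx'K hy'K⟩
    ((h.kPhi_cont z1 α δ T).mono (Set.prod_mono hKΩ hKΩ))
  rw [isMaxOn_iff] at hqmax
  obtain ⟨x, y⟩ := q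
  have hxK : x ∈ K := hq.1
  have hyK : y ∈ K := hq.2
  have hx : x ∈ Ω := hKΩ hxK
  have hy : y ∈ Ω := hKΩ hyK
  have hpos : 0 < kPhi u z1 α δ T x y :=
    hpos'.trans_le (hqmax (x', y') (Set.mk_mem_prod hx'K hy'K))
  have hmax : ∀ a ∈ Ω, ∀ b ∈ Ω, kPhi u z1 α δ T a b ≤ kPhi u z1 α δ T x y := fun a ha b hb => by
    by_cases hab : 0 < kPhi u z1 α δ T a b
    · obtain ⟨-, haK, hbK⟩ := key a ha b hb hab
      exact hqmax (a, b) (Set.mk_mem_prod haK hbK)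
    · exact (not_lt.1 hab).trans hpos.le
  obtain ⟨hh0, -, -⟩ := key x hx y hy hpos
  have hzΩ := h.mid_mem hx hy
  have hmid := h.mid hx hy
  have hzK : (2⁻¹ : ℝ) • (x + y) ∈ K := by
    have e1 : u x ≤ M2 := hxK.2
    have e2 : u y ≤ M2 := hyK.2
    exact ⟨hzΩ, by linarith⟩
  have hh1' := hh1 _ hzΩ
  obtain ⟨z, hz⟩ : ∃ z, z = (2⁻¹ : ℝ) • (x + y) := ⟨_, rfl⟩
  obtain ⟨k, hk⟩ : ∃ k, k = (2⁻¹ : ℝ) • (x - y) := ⟨_, rfl⟩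
  rw [kPhi, ← hz, ← hk] at hpos
  rw [← hz] at hh0 hzΩ hmid hzK hh1'
  have hk0 : k ≠ 0 := by
    intro h0
    rw [h0, kq_zero, mul_zero, mul_zero] at hpos
    linarith
  have hkp := kq_pos hk0
  have hrz : r ≤ ‖z - z1‖ := by
    by_contra hlt
    have ex : z + k = x := by rw [hz, hk]; module
    have ey : z - k = y := by rw [hz, hk]; module
    have e1 := hinner z k (not_le.1 hlt).le (ex ▸ hx) (ey ▸ hy)
    rw [ex, ey] at e1
    have e2 : δ * ((Real.exp (-α * kpsi u z1 z) - Real.exp (-α * T)) * kq k) ≤ cI * (1 * kq k) := by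
      gcongr
    linarith
  obtain ⟨i1, i2, i3⟩ := hcst x hxK y hyK z hzK hrz
  have hdet := h.barrier_det hx hy hδ.le hαp.le hmax hz hk hk0 hh0.le hL0 (hL x hxK y hyK)
  have hW := ke_ineq (N := (n : ℝ) + 1) (by positivity) hC1 hL0 hc0 hα i1 i2 i3
  have hκ : 0 < δ * Real.exp (-α * kpsi u z1 z) * kq k := by positivity
  have h1 := mul_le_mul_of_nonneg_left hW hκ.le
  have h2 : -(δ * Real.exp (-α * kpsi u z1 z) * kq k) < u z - (u x + u y) / 2 := by
    have e3 : 0 < δ * (Real.exp (-α * T) * kq k) := by positivity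
    linarith
  have hN : (0 : ℝ) < (n : ℝ) + 1 := by positivity
  have h3 := mul_lt_mul_of_pos_left h2 hN
  linarith

lemma KeHyp.strict (h : KeHyp n Ω u) {z0 : Fin n → ℂ} (hz0 : z0 ∈ Ω) (k : Fin n → ℂ) (hk : k ≠ 0) :
    0 < kB u z0 k k := by
  obtain ⟨z1, hz1, hpsi, r, hr, hball⟩ := h.exists_center ⟨z0, hz0⟩
  obtain ⟨α, δ, hα, hδ, hP⟩ := h.claim hz1 hpsi hr hball (kpsi u z1 z0 + 1)
  have hh : 0 < Real.exp (-α * kpsi u z1 z0) - Real.exp (-α * (kpsi u z1 z0 + 1)) := by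
    rw [sub_pos, Real.exp_lt_exp]; linarith
  have hkp := kq_pos hk
  have := h.kB_ge (k := k) hz0 (a := δ * ((Real.exp (-α * kpsi u z1 z0)
      - Real.exp (-α * (kpsi u z1 z0 + 1))) * kq k)) (by
    filter_upwards [ke_line_mem h.op hz0 k, ke_line_mem h.op hz0 (-k)] with t h1 h2
    have h3 := hP _ h1 _ h2
    have e1 : (2⁻¹ : ℝ) • (z0 + t • k + (z0 + t • (-k))) = z0 := by module
    have e2 : (2⁻¹ : ℝ) • (z0 + t • k - (z0 + t • (-k))) = t • k := by module
    have e3 : kq (t • k) = t * (t * kq k) := by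
      have := kq_add_smul 0 k t
      rw [zero_add, kq_zero] at this
      rw [this]
      simp [kip]
    rw [kPhi, e1, e2, e3] at h3
    linarith)
  have e : 0 < δ * ((Real.exp (-α * kpsi u z1 z0)
      - Real.exp (-α * (kpsi u z1 z0 + 1))) * kq k) := by positivity
  linarith

end strict3

theorem strict_convexity_of_KE_potential (n : ℕ) (hn : 1 ≤ n)
    (Ω : Set (Fin n → ℂ)) (hΩo : IsOpen Ω) (hΩb : Bornology.IsBounded Ω)
    (hΩsc : StrictConvex ℝ Ω)
    (hΩsmooth : ∃ ρ : (Fin n → ℂ) → ℝ, ContDiff ℝ (⊤ : ℕ∞) ρ ∧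
      Ω = {z | ρ z < 0} ∧ frontier Ω = {z | ρ z = 0} ∧
      ∀ z ∈ frontier Ω, fderiv ℝ ρ z ≠ 0)
    (u : (Fin n → ℂ) → ℝ) (hu : ContDiffOn ℝ (⊤ : ℕ∞) u Ω)
    (hpsh : ∀ z ∈ Ω, (hessA u z).PosDef)
    (hKE : ∀ z ∈ Ω, (hessA u z).det = (Real.exp ((n + 1) * u z) : ℂ))
    (hblow : ∀ p ∈ frontier Ω, Filter.Tendsto u (nhdsWithin p Ω) Filter.atTop)
    (v : (Fin n → ℂ) → ℝ) (hv2 : ContDiffOn ℝ 2 v (closure Ω))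
    (hvu : ∀ z ∈ Ω, v z = Real.exp (-u z))
    (hv0 : ∀ z ∈ frontier Ω, v z = 0) :
    ∀ z ∈ Ω, (realHess u z).PosDef := by
  have h : KeHyp n Ω u := ⟨hΩo, hΩb, hΩsc.convex, hu, hpsh, hKE, hblow⟩
  exact fun z hz => ke_realHess (h.cd hz) fun k hk => h.strict hz k hk

end
end

section
/- Let u be a smooth strictly plurisubharmonic function on an open set Ω ⊆ ℂ^n satisfying det(u_{ij̄}) = e^{(n+1)u} on Ω, and set A = (u_{ij̄}). Then u^{ij̄} ∂_{j̄}( (Ā)⁻¹ · ∂_i Ā ) = (n+1)·I on Ω (summation over i, j), where I is the n×n identity matrix. -/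
open Complex Matrix
open scoped ComplexOrder

noncomputable section

/-- Common form of the two Wirtinger derivatives. -/
def WD {n : ℕ} (c : ℂ) (f : (Fin n → ℂ) → ℂ) (j : Fin n) (z : Fin n → ℂ) : ℂ :=
  (fderiv ℝ f z (Pi.single j 1) + c * fderiv ℝ f z (Pi.single j Complex.I)) / 2

lemma wdz_eq {n : ℕ} : @wdz n = WD (-Complex.I) := by
  funext f j z; simp only [wdz, WD]; ring

lemma wdzbar_eq {n : ℕ} : @wdzbar n = WD Complex.I := by
  funext f j z; simp only [wdzbar, WD]

/-- Smooth on `Ω`. -/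
def Sm {n : ℕ} (Ω : Set (Fin n → ℂ)) (f : (Fin n → ℂ) → ℂ) : Prop :=
  ContDiffOn ℝ (⊤ : ℕ∞) f Ω

section
variable {n : ℕ} {Ω : Set (Fin n → ℂ)}

lemma Sm.diff (hΩ : IsOpen Ω) {f : (Fin n → ℂ) → ℂ} (hf : Sm Ω f) {z} (hz : z ∈ Ω) :
    DifferentiableAt ℝ f z :=
  (hf.contDiffAt (hΩ.mem_nhds hz)).differentiableAt (by simp)

lemma Sm.fd (hΩ : IsOpen Ω) {f : (Fin n → ℂ) → ℂ} (hf : Sm Ω f) :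
    ContDiffOn ℝ (⊤ : ℕ∞) (fderiv ℝ f) Ω :=
  ContDiffOn.fderiv_of_isOpen hf hΩ (by simp)

lemma Sm.fdv (hΩ : IsOpen Ω) {f : (Fin n → ℂ) → ℂ} (hf : Sm Ω f) (v : Fin n → ℂ) :
    Sm Ω (fun w => fderiv ℝ f w v) :=
  (hf.fd hΩ).clm_apply contDiffOn_const

lemma Sm.mul {f g : (Fin n → ℂ) → ℂ} (hf : Sm Ω f) (hg : Sm Ω g) :
    Sm Ω (fun w => f w * g w) := ContDiffOn.mul hf hg

lemma Sm.add {f g : (Fin n → ℂ) → ℂ} (hf : Sm Ω f) (hg : Sm Ω g) :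
    Sm Ω (fun w => f w + g w) := ContDiffOn.add hf hg

lemma Sm.const (c : ℂ) : Sm Ω (fun _ => c) := contDiffOn_const

lemma Sm.WD (hΩ : IsOpen Ω) {f : (Fin n → ℂ) → ℂ} (hf : Sm Ω f) (c : ℂ) (j : Fin n) :
    Sm Ω (WD c f j) := by
  have := (((hf.fdv hΩ (Pi.single j 1)).add
    ((Sm.const c).mul (hf.fdv hΩ (Pi.single j Complex.I)))).mul (Sm.const (2⁻¹ : ℂ)))
  exact this

lemma WD_congr (hΩ : IsOpen Ω) {f g : (Fin n → ℂ) → ℂ} (h : ∀ w ∈ Ω, f w = g w) (c : ℂ)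
    (j : Fin n) {z} (hz : z ∈ Ω) : WD c f j z = WD c g j z := by
  have : f =ᶠ[nhds z] g := by
    filter_upwards [hΩ.mem_nhds hz] with w hw using h w hw
  simp only [WD, this.fderiv_eq]

lemma WD_mul {f g : (Fin n → ℂ) → ℂ} {z} (hf : DifferentiableAt ℝ f z)
    (hg : DifferentiableAt ℝ g z) (c : ℂ) (j : Fin n) :
    WD c (fun w => f w * g w) j z = WD c f j z * g z + f z * WD c g j z := by
  simp only [WD, fderiv_fun_mul hf hg]
  simp
  ring

lemma WD_const (a c : ℂ) (j : Fin n) (z) : WD c (fun _ => a) j z = 0 := by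
  simp [WD]

lemma WD_sum {ι : Type*} (s : Finset ι) {f : ι → (Fin n → ℂ) → ℂ} {z}
    (hf : ∀ i ∈ s, DifferentiableAt ℝ (f i) z) (c : ℂ) (j : Fin n) :
    WD c (fun w => ∑ i ∈ s, f i w) j z = ∑ i ∈ s, WD c (f i) j z := by
  simp only [WD, fderiv_fun_sum hf]
  simp [Finset.mul_sum, ← Finset.sum_add_distrib, Finset.sum_div]

lemma WD_prod {ι : Type*} [DecidableEq ι] (s : Finset ι) {f : ι → (Fin n → ℂ) → ℂ} {z}
    (hf : ∀ i ∈ s, DifferentiableAt ℝ (f i) z) (c : ℂ) (j : Fin n) :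
    WD c (fun w => ∏ i ∈ s, f i w) j z
      = ∑ i ∈ s, (∏ k ∈ s.erase i, f k z) * WD c (f i) j z := by
  simp only [WD, fderiv_finsetProd hf]
  simp only [_root_.sum_apply, _root_.smul_apply, smul_eq_mul,
    Finset.mul_sum, ← Finset.sum_add_distrib, Finset.sum_div]
  refine Finset.sum_congr rfl fun i _ => ?_
  ring

lemma WD_cmul {f : (Fin n → ℂ) → ℂ} {z} (hf : DifferentiableAt ℝ f z) (a c : ℂ) (j : Fin n) :
    WD c (fun w => a * f w) j z = a * WD c f j z := by
  rw [WD_mul (differentiableAt_const a) hf, WD_const]; ring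

lemma WD_exp {f : (Fin n → ℂ) → ℂ} {z} (hf : DifferentiableAt ℝ f z) (c : ℂ) (j : Fin n) :
    WD c (fun w => Complex.exp (f w)) j z = Complex.exp (f z) * WD c f j z := by
  simp only [WD, hf.hasFDerivAt.cexp.fderiv]
  simp
  ring

lemma fderiv_comm' (hΩ : IsOpen Ω) {f : (Fin n → ℂ) → ℂ} (hf : Sm Ω f) {z} (hz : z ∈ Ω)
    (v w : Fin n → ℂ) : fderiv ℝ (fun x => fderiv ℝ f x v) z w
      = fderiv ℝ (fun x => fderiv ℝ f x w) z v := by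
  have hd : DifferentiableAt ℝ (fderiv ℝ f) z :=
    ((hf.fd hΩ).contDiffAt (hΩ.mem_nhds hz)).differentiableAt (by simp)
  have hs : IsSymmSndFDerivAt ℝ f z :=
    (hf.contDiffAt (hΩ.mem_nhds hz)).isSymmSndFDerivAt (by
      simp only [minSmoothness_of_isRCLikeNormedField]; exact WithTop.coe_le_coe.2 (le_top : (2 : ℕ∞) ≤ ⊤))
  rw [fderiv_clm_apply hd (differentiableAt_const _), fderiv_clm_apply hd (differentiableAt_const _)]
  simp
  exact hs w v

lemma fderiv_WD (hΩ : IsOpen Ω) {f : (Fin n → ℂ) → ℂ} (hf : Sm Ω f) {z} (hz : z ∈ Ω)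
    (c : ℂ) (j : Fin n) (v : Fin n → ℂ) : fderiv ℝ (WD c f j) z v =
      (fderiv ℝ (fun x => fderiv ℝ f x (Pi.single j 1)) z v
        + c * fderiv ℝ (fun x => fderiv ℝ f x (Pi.single j Complex.I)) z v) / 2 := by
  have h1 := (hf.fdv hΩ (Pi.single j 1)).diff hΩ hz
  have h2 := (hf.fdv hΩ (Pi.single j Complex.I)).diff hΩ hz
  have := (((h1.hasFDerivAt).add (h2.hasFDerivAt.const_mul c)).mul_const (2⁻¹ : ℂ)).fderiv
  have e : WD c f j = (fun y => ((fun x => fderiv ℝ f x (Pi.single j 1)) + fun x => c * fderiv ℝ f x (Pi.single j Complex.I)) y * 2⁻¹) := rfl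
  rw [e, this]
  simp
  ring

lemma WD_comm (hΩ : IsOpen Ω) {f : (Fin n → ℂ) → ℂ} (hf : Sm Ω f) {z} (hz : z ∈ Ω)
    (c d : ℂ) (i j : Fin n) : WD c (WD d f j) i z = WD d (WD c f i) j z := by
  rw [WD, fderiv_WD hΩ hf hz, fderiv_WD hΩ hf hz, WD, fderiv_WD hΩ hf hz, fderiv_WD hΩ hf hz]
  rw [fderiv_comm' hΩ hf hz (Pi.single i 1) (Pi.single j 1),
    fderiv_comm' hΩ hf hz (Pi.single i Complex.I) (Pi.single j 1),
    fderiv_comm' hΩ hf hz (Pi.single i 1) (Pi.single j Complex.I),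
    fderiv_comm' hΩ hf hz (Pi.single i Complex.I) (Pi.single j Complex.I)]
  ring

/-- Entrywise derivative. -/
def MD {n : ℕ} (c : ℂ) (F : (Fin n → ℂ) → Matrix (Fin n) (Fin n) ℂ) (j : Fin n)
    (z : Fin n → ℂ) : Matrix (Fin n) (Fin n) ℂ :=
  Matrix.of fun p q => WD c (fun w => F w p q) j z

/-- Entrywise smooth. -/
def MSm {n : ℕ} (Ω : Set (Fin n → ℂ)) (F : (Fin n → ℂ) → Matrix (Fin n) (Fin n) ℂ) : Prop :=
  ∀ p q, Sm Ω (fun w => F w p q)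

lemma MSm.MD (hΩ : IsOpen Ω) {F : (Fin n → ℂ) → Matrix (Fin n) (Fin n) ℂ} (hF : MSm Ω F)
    (c : ℂ) (j : Fin n) : MSm Ω (MD c F j) := fun p q => (hF p q).WD hΩ c j

lemma MSm.tr {F : (Fin n → ℂ) → Matrix (Fin n) (Fin n) ℂ} (hF : MSm Ω F) :
    MSm Ω (fun w => (F w)ᵀ) := fun p q => hF q p

lemma MSm.det {F : (Fin n → ℂ) → Matrix (Fin n) (Fin n) ℂ} (hF : MSm Ω F) :
    Sm Ω (fun w => (F w).det) := by
  simp only [Matrix.det_apply']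
  refine ContDiffOn.sum fun σ _ => ContDiffOn.mul contDiffOn_const ?_
  exact contDiffOn_prod fun i _ => hF _ _

lemma MSm.inv {F : (Fin n → ℂ) → Matrix (Fin n) (Fin n) ℂ} (hF : MSm Ω F)
    (h0 : ∀ w ∈ Ω, (F w).det ≠ 0) : MSm Ω (fun w => (F w)⁻¹) := by
  intro p q
  simp only [Matrix.inv_def, Ring.inverse_eq_inv', Matrix.smul_apply, smul_eq_mul,
    Matrix.adjugate_apply]
  refine Sm.mul (ContDiffOn.inv hF.det h0) (MSm.det (F := fun w => (F w).updateRow q (Pi.single p 1)) ?_)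
  intro a b
  by_cases h : a = q
  · subst h; simpa using Sm.const _
  · simpa [Matrix.updateRow_ne h] using hF a b

lemma MD_mul (hΩ : IsOpen Ω) {F G : (Fin n → ℂ) → Matrix (Fin n) (Fin n) ℂ} (hF : MSm Ω F)
    (hG : MSm Ω G) (c : ℂ) (j : Fin n) {z} (hz : z ∈ Ω) :
    MD c (fun w => F w * G w) j z = MD c F j z * G z + F z * MD c G j z := by
  ext p q
  simp only [MD, Matrix.of_apply, Matrix.mul_apply, Matrix.add_apply]
  rw [WD_sum _ fun k _ => ((hF p k).mul (hG k q)).diff hΩ hz, ← Finset.sum_add_distrib]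
  exact Finset.sum_congr rfl fun k _ => WD_mul ((hF p k).diff hΩ hz) ((hG k q).diff hΩ hz) c j

lemma MD_congr (hΩ : IsOpen Ω) {F G : (Fin n → ℂ) → Matrix (Fin n) (Fin n) ℂ}
    (h : ∀ w ∈ Ω, F w = G w) (c : ℂ) (j : Fin n) {z} (hz : z ∈ Ω) :
    MD c F j z = MD c G j z := by
  ext p q
  exact WD_congr hΩ (fun w hw => by rw [h w hw]) c j hz

lemma MD_inv (hΩ : IsOpen Ω) {F : (Fin n → ℂ) → Matrix (Fin n) (Fin n) ℂ} (hF : MSm Ω F)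
    (h0 : ∀ w ∈ Ω, (F w).det ≠ 0) (c : ℂ) (j : Fin n) {z} (hz : z ∈ Ω) :
    MD c (fun w => (F w)⁻¹) j z = - ((F z)⁻¹ * MD c F j z * (F z)⁻¹) := by
  have h1 : MD c (fun w => (F w)⁻¹ * F w) j z = 0 := by
    rw [MD_congr hΩ (G := fun _ => 1) (fun w hw => Matrix.nonsing_inv_mul _ (h0 w hw).isUnit) c j hz]
    ext p q
    exact WD_const _ _ _ _
  rw [MD_mul hΩ (hF.inv h0) hF c j hz] at h1
  have h2 : MD c (fun w => (F w)⁻¹) j z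
      = MD c (fun w => (F w)⁻¹) j z * F z * (F z)⁻¹ := by
    rw [Matrix.mul_assoc, Matrix.mul_nonsing_inv _ (h0 z hz).isUnit, Matrix.mul_one]
  rw [h2, eq_neg_of_add_eq_zero_left h1, Matrix.neg_mul]

lemma WD_det (hΩ : IsOpen Ω) {F : (Fin n → ℂ) → Matrix (Fin n) (Fin n) ℂ} (hF : MSm Ω F)
    (h0 : ∀ w ∈ Ω, (F w).det ≠ 0) (c : ℂ) (j : Fin n) {z} (hz : z ∈ Ω) :
    WD c (fun w => (F w).det) j z = (F z).det * ((F z)⁻¹ * MD c F j z).trace := by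
  have key : WD c (fun w => (F w).det) j z
      = ∑ k, ((F z).updateCol k (fun p => MD c F j z p k)).det := by
    simp only [Matrix.det_apply']
    have hp : ∀ σ : Equiv.Perm (Fin n), Sm Ω (fun w => ∏ i, F w (σ i) i) :=
      fun σ => contDiffOn_prod fun i _ => hF (σ i) i
    rw [WD_sum _ fun σ _ => ((Sm.const _).mul (hp σ)).diff hΩ hz, Finset.sum_comm]
    refine Finset.sum_congr rfl fun σ _ => ?_
    rw [WD_cmul ((hp σ).diff hΩ hz),
      WD_prod _ fun i _ => (hF (σ i) i).diff hΩ hz, Finset.mul_sum]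
    refine Finset.sum_congr rfl fun k _ => ?_
    rw [← Finset.prod_erase_mul _ _ (Finset.mem_univ k)]
    simp only [Matrix.updateCol_self]
    congr 2
    refine Finset.prod_congr rfl fun i hi => ?_
    rw [Matrix.updateCol_ne (Finset.ne_of_mem_erase hi)]
  rw [key, Matrix.inv_def, Ring.inverse_eq_inv', Matrix.smul_mul, Matrix.trace_smul, smul_eq_mul,
    mul_inv_cancel_left₀ (h0 z hz)]
  simp only [Matrix.trace, Matrix.diag]
  refine Finset.sum_congr rfl fun k _ => ?_
  rw [← Matrix.cramer_apply, Matrix.cramer_eq_adjugate_mulVec]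
  rfl

lemma WD_trace (hΩ : IsOpen Ω) {F : (Fin n → ℂ) → Matrix (Fin n) (Fin n) ℂ} (hF : MSm Ω F)
    (c : ℂ) (j : Fin n) {z} (hz : z ∈ Ω) :
    WD c (fun w => (F w).trace) j z = (MD c F j z).trace := by
  simp only [Matrix.trace, Matrix.diag]
  exact WD_sum _ (fun k _ => (hF k k).diff hΩ hz) c j

lemma MSm.mul {F G : (Fin n → ℂ) → Matrix (Fin n) (Fin n) ℂ} (hF : MSm Ω F) (hG : MSm Ω G) :
    MSm Ω (fun w => F w * G w) := by
  intro p q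
  simp only [Matrix.mul_apply]
  exact ContDiffOn.sum fun k _ => (hF p k).mul (hG k q)

end

theorem trace_AinvbarDA_eq_id (n : ℕ) (Ω : Set (Fin n → ℂ)) (hΩ : IsOpen Ω)
    (u : (Fin n → ℂ) → ℝ) (hu : ContDiffOn ℝ (⊤ : ℕ∞) u Ω)
    (hpsh : ∀ z ∈ Ω, (hessA u z).PosDef)
    (hKE : ∀ z ∈ Ω, (hessA u z).det = (Real.exp ((n + 1) * u z) : ℂ)) :
    ∀ z ∈ Ω,
      ∑ i, ∑ j, uInv u z i j •
          mwdzbar (fun w => (mconj (hessA u w))⁻¹ *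
            mwdz (fun w' => mconj (hessA u w')) i w) j z
        = ((n : ℂ) + 1) • (1 : Matrix (Fin n) (Fin n) ℂ) := by
  have hU : Sm Ω (cplx u) := Complex.ofRealCLM.contDiff.comp_contDiffOn hu
  have hA : MSm Ω (hessA u) := by
    intro p q
    simp only [hessA, wdz_eq, wdzbar_eq, Matrix.of_apply]
    exact (hU.WD hΩ _ q).WD hΩ _ p
  have h0 : ∀ w ∈ Ω, (hessA u w).det ≠ 0 := fun w hw => (hpsh w hw).det_pos.ne'
  have h0t : ∀ w ∈ Ω, ((hessA u w)ᵀ).det ≠ 0 := fun w hw => by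
    rw [Matrix.det_transpose]; exact h0 w hw
  have hc : ∀ w ∈ Ω, mconj (hessA u w) = (hessA u w)ᵀ := by
    intro w hw
    have := (hpsh w hw).isHermitian
    ext p q
    exact this.apply q p
  -- third order symmetries
  have s1 : ∀ w ∈ Ω, ∀ i q r, MD (-Complex.I) (hessA u) i w q r
      = MD (-Complex.I) (hessA u) q w i r := by
    intro w hw i q r
    simp only [MD, hessA, wdz_eq, wdzbar_eq, Matrix.of_apply]
    exact WD_comm hΩ (hU.WD hΩ _ r) hw _ _ _ _
  have hA' : ∀ w ∈ Ω, ∀ p q, hessA u w p q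
      = WD Complex.I (WD (-Complex.I) (cplx u) p) q w := by
    intro w hw p q
    simp only [hessA, wdz_eq, wdzbar_eq, Matrix.of_apply]
    exact WD_comm hΩ hU hw _ _ _ _
  have s2 : ∀ w ∈ Ω, ∀ j b a, MD Complex.I (hessA u) j w b a
      = MD Complex.I (hessA u) a w b j := by
    intro w hw j b a
    simp only [MD, Matrix.of_apply]
    rw [WD_congr hΩ (fun w hw => hA' w hw b a) _ _ hw,
      WD_congr hΩ (fun w hw => hA' w hw b j) _ _ hw]
    exact WD_comm hΩ (hU.WD hΩ _ b) hw _ _ _ _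
  -- fourth order
  have s4 : ∀ w ∈ Ω, ∀ i j q r, MD Complex.I (MD (-Complex.I) (hessA u) i) j w q r
      = MD Complex.I (MD (-Complex.I) (hessA u) q) r w i j := by
    intro w hw i j q r
    have e1 : MD Complex.I (MD (-Complex.I) (hessA u) i) j w q r
        = MD Complex.I (MD (-Complex.I) (hessA u) q) j w i r :=
      WD_congr hΩ (fun w hw => s1 w hw i q r) _ _ hw
    have e2 : ∀ j r, MD Complex.I (MD (-Complex.I) (hessA u) q) j w i r
        = WD (-Complex.I) (fun x => MD Complex.I (hessA u) j x i r) q w := fun j r =>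
      WD_comm hΩ (hA i r) hw _ _ _ _
    rw [e1, e2, e2]
    exact WD_congr hΩ (fun w hw => s2 w hw j i r) _ _ hw
  -- differentiated Monge-Ampere equation
  have t1 : ∀ w ∈ Ω, ∀ q, ((hessA u w)⁻¹ * MD (-Complex.I) (hessA u) q w).trace
      = ((n : ℂ) + 1) * WD (-Complex.I) (cplx u) q w := by
    intro w hw q
    have a1 := WD_det hΩ hA h0 (-Complex.I) q hw
    have a2 : ∀ x ∈ Ω, (hessA u x).det = Complex.exp (((n : ℂ) + 1) * cplx u x) := by
      intro x hx
      rw [hKE x hx]; simp [cplx]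
    rw [WD_congr hΩ a2 _ _ hw, WD_exp (((Sm.const _).mul hU).diff hΩ hw),
      WD_cmul (hU.diff hΩ hw), ← a2 w hw] at a1
    exact (mul_left_cancel₀ (h0 w hw) a1).symm
  have t2 : ∀ w ∈ Ω, ∀ q r,
      ((hessA u w)⁻¹ * MD Complex.I (MD (-Complex.I) (hessA u) q) r w).trace
      - ((hessA u w)⁻¹ * MD Complex.I (hessA u) r w * (hessA u w)⁻¹
          * MD (-Complex.I) (hessA u) q w).trace
      = ((n : ℂ) + 1) * hessA u w q r := by
    intro w hw q r
    have b := WD_congr hΩ (fun w hw => t1 w hw q) Complex.I r hw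
    rw [WD_trace hΩ ((hA.inv h0).mul (hA.MD hΩ _ q)) _ _ hw,
      MD_mul hΩ (hA.inv h0) (hA.MD hΩ _ q) _ _ hw, MD_inv hΩ hA h0 _ _ hw,
      WD_cmul ((hU.WD hΩ _ q).diff hΩ hw), ← hA' w hw, Matrix.trace_add, Matrix.neg_mul,
      Matrix.trace_neg] at b
    rw [← b]; ring
  intro z hz
  have m1 : ∀ i j, mwdzbar (fun w => (mconj (hessA u w))⁻¹ *
            mwdz (fun w' => mconj (hessA u w')) i w) j z
      = (((hessA u z)⁻¹)ᵀ * ((MD Complex.I (MD (-Complex.I) (hessA u) i) j z)ᵀ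
        - (MD Complex.I (hessA u) j z)ᵀ * ((hessA u z)⁻¹)ᵀ
          * (MD (-Complex.I) (hessA u) i z)ᵀ)) := by
    intro i j
    have e : ∀ w ∈ Ω, (mconj (hessA u w))⁻¹ * mwdz (fun w' => mconj (hessA u w')) i w
        = ((hessA u w)ᵀ)⁻¹ * MD (-Complex.I) (fun w' => (hessA u w')ᵀ) i w := by
      intro w hw
      rw [hc w hw]
      simp only [mwdz, wdz_eq]
      congr 1
      exact MD_congr hΩ hc _ _ hw
    simp only [mwdzbar, wdzbar_eq]
    have e' := MD_congr hΩ e Complex.I j hz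
    rw [MD_mul hΩ (hA.tr.inv h0t) (hA.tr.MD hΩ _ i) _ _ hz, MD_inv hΩ hA.tr h0t _ _ hz] at e'
    refine e'.trans ?_
    rw [Matrix.transpose_nonsing_inv]
    have f1 : MD Complex.I (fun w' => (hessA u w')ᵀ) j z = (MD Complex.I (hessA u) j z)ᵀ := rfl
    have f2 : MD (-Complex.I) (fun w' => (hessA u w')ᵀ) i z
      = (MD (-Complex.I) (hessA u) i z)ᵀ := rfl
    have f3 : MD Complex.I (MD (-Complex.I) (fun w' => (hessA u w')ᵀ) i) j z
      = (MD Complex.I (MD (-Complex.I) (hessA u) i) j z)ᵀ := rfl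
    rw [f1, f2, f3]
    noncomm_ring
  simp only [m1, uInv]
  have m2 : ∑ i, ∑ j, (hessA u z)⁻¹ j i • ((MD Complex.I (MD (-Complex.I) (hessA u) i) j z)ᵀ
        - (MD Complex.I (hessA u) j z)ᵀ * ((hessA u z)⁻¹)ᵀ
          * (MD (-Complex.I) (hessA u) i z)ᵀ) = ((n : ℂ) + 1) • (hessA u z)ᵀ := by
    ext r q
    rw [Matrix.smul_apply, Matrix.transpose_apply, smul_eq_mul, ← t2 z hz q r]
    have g1 : ((hessA u z)⁻¹ * MD Complex.I (MD (-Complex.I) (hessA u) q) r z).trace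
        = ∑ i, ∑ j, (hessA u z)⁻¹ j i *
          MD Complex.I (MD (-Complex.I) (hessA u) i) j z q r := by
      simp only [Matrix.trace, Matrix.diag, Matrix.mul_apply]
      rw [Finset.sum_comm]
      refine Finset.sum_congr rfl fun i _ => Finset.sum_congr rfl fun j _ => ?_
      rw [s4 z hz i j q r]
    have g2 : ((hessA u z)⁻¹ * MD Complex.I (hessA u) r z * (hessA u z)⁻¹
          * MD (-Complex.I) (hessA u) q z).trace
        = ∑ i, ∑ j, (hessA u z)⁻¹ j i * ((MD Complex.I (hessA u) j z)ᵀ * ((hessA u z)⁻¹)ᵀ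
          * (MD (-Complex.I) (hessA u) i z)ᵀ) r q := by
      have g3 : ∀ i j, ((MD Complex.I (hessA u) j z)ᵀ * ((hessA u z)⁻¹)ᵀ
          * (MD (-Complex.I) (hessA u) i z)ᵀ) r q
          = (MD (-Complex.I) (hessA u) q z * ((hessA u z)⁻¹ * MD Complex.I (hessA u) r z)) i j := by
        intro i j
        rw [← Matrix.transpose_mul, ← Matrix.transpose_mul, Matrix.transpose_apply]
        simp only [Matrix.mul_apply]
        refine Finset.sum_congr rfl fun a _ => ?_
        rw [s1 z hz i q a]
        congr 1
        refine Finset.sum_congr rfl fun b _ => ?_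
        rw [s2 z hz j b r]
      rw [show (hessA u z)⁻¹ * MD Complex.I (hessA u) r z * (hessA u z)⁻¹
          * MD (-Complex.I) (hessA u) q z = ((hessA u z)⁻¹ * MD Complex.I (hessA u) r z) *
          ((hessA u z)⁻¹ * MD (-Complex.I) (hessA u) q z) by noncomm_ring,
        Matrix.trace_mul_comm, Matrix.mul_assoc]
      simp only [g3]
      rw [Finset.sum_comm]
      rfl
    rw [g1, g2, ← Finset.sum_sub_distrib, Matrix.sum_apply]
    refine Finset.sum_congr rfl fun i _ => ?_
    rw [← Finset.sum_sub_distrib, Matrix.sum_apply]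
    refine Finset.sum_congr rfl fun j _ => ?_
    rw [Matrix.smul_apply, Matrix.sub_apply, Matrix.transpose_apply, smul_eq_mul, mul_sub]
  simp only [← Matrix.mul_smul, ← Matrix.mul_sum]
  rw [m2, Matrix.mul_smul, ← Matrix.transpose_mul, Matrix.mul_nonsing_inv _ (h0 z hz).isUnit,
    Matrix.transpose_one]

end
end

section
/- Let u be a smooth strictly plurisubharmonic function on an open set Ω ⊆ ℂ^n satisfying det(u_{ij̄}) = e^{(n+1)u} on Ω, and set A = (u_{ij̄}), B = (u_{ij}). Then u^{ij̄} ∂_{j̄}( (Ā)⁻¹ · ∂_i B̄ ) = (n+1)·(Ā)⁻¹·B̄ on Ω (summation over i, j). -/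
open Complex Matrix
open scoped ComplexOrder

noncomputable section

/-- Common form of the two Wirtinger derivatives. -/
def wDir {n : ℕ} (c : ℂ) (f : (Fin n → ℂ) → ℂ) (j : Fin n) (z : Fin n → ℂ) : ℂ :=
  (fderiv ℝ f z (Pi.single j 1) + c * fderiv ℝ f z (Pi.single j Complex.I)) / 2

theorem wdz_eq_wDir {n : ℕ} (f : (Fin n → ℂ) → ℂ) (j : Fin n) : wdz f j = wDir (-Complex.I) f j := by
  funext z; simp only [wdz, wDir]; ring

theorem wdzbar_eq_wDir {n : ℕ} (f : (Fin n → ℂ) → ℂ) (j : Fin n) :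
    wdzbar f j = wDir Complex.I f j := rfl

theorem wDir_congr {n : ℕ} {Ω : Set (Fin n → ℂ)} (hΩ : IsOpen Ω) {f g : (Fin n → ℂ) → ℂ}
    (h : ∀ z ∈ Ω, f z = g z) (c : ℂ) (j : Fin n) : ∀ z ∈ Ω, wDir c f j z = wDir c g j z := by
  intro z hz
  have : f =ᶠ[nhds z] g := Filter.eventuallyEq_of_mem (hΩ.mem_nhds hz) h
  simp only [wDir, this.fderiv_eq]

theorem smooth_diffAt {n : ℕ} {Ω : Set (Fin n → ℂ)} (hΩ : IsOpen Ω) {f : (Fin n → ℂ) → ℂ}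
    (hf : ContDiffOn ℝ (⊤ : ℕ∞) f Ω) {z : Fin n → ℂ} (hz : z ∈ Ω) : DifferentiableAt ℝ f z :=
  (hf.contDiffAt (hΩ.mem_nhds hz)).differentiableAt (by simp)

theorem smooth_fderiv {n : ℕ} {Ω : Set (Fin n → ℂ)} (hΩ : IsOpen Ω) {f : (Fin n → ℂ) → ℂ}
    (hf : ContDiffOn ℝ (⊤ : ℕ∞) f Ω) : ContDiffOn ℝ (⊤ : ℕ∞) (fderiv ℝ f) Ω :=
  hf.fderiv_of_isOpen hΩ (by simp)

theorem smooth_wDir {n : ℕ} {Ω : Set (Fin n → ℂ)} (hΩ : IsOpen Ω) {f : (Fin n → ℂ) → ℂ}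
    (hf : ContDiffOn ℝ (⊤ : ℕ∞) f Ω) (c : ℂ) (j : Fin n) :
    ContDiffOn ℝ (⊤ : ℕ∞) (wDir c f j) Ω := by
  have h := smooth_fderiv hΩ hf
  have h1 : ∀ v, ContDiffOn ℝ (⊤ : ℕ∞) (fun z => fderiv ℝ f z v) Ω :=
    fun v => h.clm_apply contDiffOn_const
  unfold wDir
  exact ((h1 _).add (contDiffOn_const.mul (h1 _))).div_const _

theorem wDir_comm {n : ℕ} {Ω : Set (Fin n → ℂ)} (hΩ : IsOpen Ω) {f : (Fin n → ℂ) → ℂ}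
    (hf : ContDiffOn ℝ (⊤ : ℕ∞) f Ω) (c d : ℂ) (i j : Fin n) :
    ∀ z ∈ Ω, wDir c (wDir d f j) i z = wDir d (wDir c f i) j z := by
  intro z hz
  have hd : DifferentiableAt ℝ (fderiv ℝ f) z :=
    ((smooth_fderiv hΩ hf).contDiffAt (hΩ.mem_nhds hz)).differentiableAt (by simp)
  have hs : IsSymmSndFDerivAt ℝ f z :=
    (hf.contDiffAt (hΩ.mem_nhds hz)).isSymmSndFDerivAt (by
      simp only [minSmoothness_of_isRCLikeNormedField]; exact WithTop.coe_le_coe.2 (le_top : (2 : ℕ∞) ≤ ⊤))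
  have hv : ∀ v, HasFDerivAt (fun w => fderiv ℝ f w v) ((fderiv ℝ (fderiv ℝ f) z).flip v) z := by
    intro v
    simpa using hd.hasFDerivAt.clm_apply (hasFDerivAt_const v z)
  have key : ∀ (e : ℂ) (k : Fin n) (v : Fin n → ℂ), fderiv ℝ (wDir e f k) z v =
      (fderiv ℝ (fderiv ℝ f) z v (Pi.single k 1)
        + e * fderiv ℝ (fderiv ℝ f) z v (Pi.single k Complex.I)) / 2 := by
    intro e k v
    have h2 := ((hv (Pi.single k 1)).add ((hv (Pi.single k Complex.I)).const_mul e)).mul_const (2⁻¹ : ℂ)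
    have h3 : HasFDerivAt (wDir e f k) _ z := h2.congr_of_eventuallyEq
      (Filter.Eventually.of_forall fun w => by simp [wDir, div_eq_mul_inv])
    rw [h3.fderiv]
    simp
    ring
  rw [wDir, key, key, wDir, key, key]
  rw [hs (Pi.single j 1) (Pi.single i 1), hs (Pi.single j 1) (Pi.single i Complex.I),
    hs (Pi.single j Complex.I) (Pi.single i 1), hs (Pi.single j Complex.I) (Pi.single i Complex.I)]
  ring

theorem wDir_mul {n : ℕ} {f g : (Fin n → ℂ) → ℂ} {z : Fin n → ℂ} (hf : DifferentiableAt ℝ f z)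
    (hg : DifferentiableAt ℝ g z) (c : ℂ) (j : Fin n) :
    wDir c (fun w => f w * g w) j z = wDir c f j z * g z + f z * wDir c g j z := by
  simp only [wDir, fderiv_fun_mul hf hg]
  simp
  ring

theorem wDir_const_mul {n : ℕ} {f : (Fin n → ℂ) → ℂ} {z : Fin n → ℂ} (hf : DifferentiableAt ℝ f z)
    (a c : ℂ) (j : Fin n) :
    wDir c (fun w => a * f w) j z = a * wDir c f j z := by
  rw [wDir_mul (differentiableAt_const a) hf]
  simp [wDir]

theorem wDir_sum {n : ℕ} {ι : Type*} (s : Finset ι) {f : ι → (Fin n → ℂ) → ℂ} {z : Fin n → ℂ}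
    (hf : ∀ i ∈ s, DifferentiableAt ℝ (f i) z) (c : ℂ) (j : Fin n) :
    wDir c (fun w => ∑ i ∈ s, f i w) j z = ∑ i ∈ s, wDir c (f i) j z := by
  simp only [wDir, fderiv_fun_sum hf, _root_.sum_apply]
  rw [Finset.mul_sum, ← Finset.sum_add_distrib, Finset.sum_div]

theorem wDir_prod {n : ℕ} {ι : Type*} [DecidableEq ι] (s : Finset ι) {f : ι → (Fin n → ℂ) → ℂ}
    {z : Fin n → ℂ} (hf : ∀ i ∈ s, DifferentiableAt ℝ (f i) z) (c : ℂ) (j : Fin n) :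
    wDir c (fun w => ∏ i ∈ s, f i w) j z
      = ∑ i ∈ s, wDir c (f i) j z * ∏ k ∈ s.erase i, f k z := by
  simp only [wDir, fderiv_finsetProd hf, _root_.sum_apply]
  rw [Finset.mul_sum, ← Finset.sum_add_distrib, Finset.sum_div]
  refine Finset.sum_congr rfl fun i _ => ?_
  simp
  ring

theorem wDir_det {n : ℕ} {M : (Fin n → ℂ) → Matrix (Fin n) (Fin n) ℂ} {z : Fin n → ℂ}
    (hM : ∀ p q, DifferentiableAt ℝ (fun w => M w p q) z) (hdet : (M z).det ≠ 0)
    (c : ℂ) (l : Fin n) :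
    wDir c (fun w => (M w).det) l z
      = (M z).det * ∑ i, ∑ j, (M z)⁻¹ i j * wDir c (fun w => M w j i) l z := by
  have hP : ∀ σ : Equiv.Perm (Fin n), DifferentiableAt ℝ (fun w => ∏ i, M w (σ i) i) z :=
    fun σ => (HasFDerivAt.finsetProd fun i _ => (hM (σ i) i).hasFDerivAt).differentiableAt
  have h1 : wDir c (fun w => (M w).det) l z
      = ∑ i, ((M z).updateCol i (fun k => wDir c (fun w => M w k i) l z)).det := by
    simp only [Matrix.det_apply']
    rw [wDir_sum]
    · rw [Finset.sum_comm]
      refine Finset.sum_congr rfl fun σ _ => ?_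
      rw [wDir_const_mul (hP σ),
        wDir_prod _ (fun i _ => hM _ _), Finset.mul_sum]
      refine Finset.sum_congr rfl fun i hi => ?_
      rw [← Finset.mul_prod_erase _ _ hi]
      congr 2
      · simp
      · refine Finset.prod_congr rfl fun k hk => ?_
        rw [Matrix.updateCol_ne (Finset.ne_of_mem_erase hk)]
    · intro σ _
      exact (differentiableAt_const _).mul (hP σ)
  rw [h1, Finset.mul_sum]
  refine Finset.sum_congr rfl fun i _ => ?_
  rw [← Matrix.cramer_apply, Matrix.cramer_eq_adjugate_mulVec, Matrix.inv_def, Finset.mul_sum]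
  simp only [Matrix.mulVec, dotProduct]
  refine Finset.sum_congr rfl fun k _ => ?_
  simp [Ring.inverse_eq_inv']
  field_simp

theorem smooth_det {n : ℕ} {Ω : Set (Fin n → ℂ)} {M : (Fin n → ℂ) → Matrix (Fin n) (Fin n) ℂ}
    (hM : ∀ p q, ContDiffOn ℝ (⊤ : ℕ∞) (fun w => M w p q) Ω) :
    ContDiffOn ℝ (⊤ : ℕ∞) (fun w => (M w).det) Ω := by
  simp only [Matrix.det_apply']
  exact ContDiffOn.sum fun σ _ => contDiffOn_const.mul (contDiffOn_prod fun i _ => hM _ _)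

theorem smooth_inv {n : ℕ} {Ω : Set (Fin n → ℂ)} {M : (Fin n → ℂ) → Matrix (Fin n) (Fin n) ℂ}
    (hM : ∀ p q, ContDiffOn ℝ (⊤ : ℕ∞) (fun w => M w p q) Ω) (hdet : ∀ z ∈ Ω, (M z).det ≠ 0)
    (p q : Fin n) : ContDiffOn ℝ (⊤ : ℕ∞) (fun w => (M w)⁻¹ p q) Ω := by
  simp only [Matrix.inv_def, Ring.inverse_eq_inv', Matrix.smul_apply, smul_eq_mul,
    Matrix.adjugate_apply]
  refine ((smooth_det hM).inv hdet).mul (smooth_det fun a b => ?_)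
  by_cases h : a = q
  · subst h
    simpa using contDiffOn_const
  · simpa [Matrix.updateRow_ne h] using hM a b

/-- derivative of the inverse -/
theorem wDir_inv {n : ℕ} {Ω : Set (Fin n → ℂ)} (hΩ : IsOpen Ω)
    {M : (Fin n → ℂ) → Matrix (Fin n) (Fin n) ℂ}
    (hM : ∀ p q, ContDiffOn ℝ (⊤ : ℕ∞) (fun w => M w p q) Ω) (hdet : ∀ z ∈ Ω, (M z).det ≠ 0)
    (c : ℂ) (l : Fin n) (r q : Fin n) : ∀ z ∈ Ω,
    wDir c (fun w => (M w)⁻¹ r q) l z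
      = - ∑ a, ∑ b, (M z)⁻¹ r a * wDir c (fun w => M w a b) l z * (M z)⁻¹ b q := by
  intro z hz
  set G : Matrix (Fin n) (Fin n) ℂ := (M z)⁻¹ with hG
  set dG : Matrix (Fin n) (Fin n) ℂ := Matrix.of fun r q => wDir c (fun w => (M w)⁻¹ r q) l z with hdG
  set dM : Matrix (Fin n) (Fin n) ℂ := Matrix.of fun r q => wDir c (fun w => M w r q) l z with hdM
  have hu : ∀ w ∈ Ω, IsUnit (M w).det := fun w hw => isUnit_iff_ne_zero.2 (hdet w hw)
  have h0 : dG * M z + G * dM = 0 := by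
    ext a b
    have h1 : wDir c (fun w => ∑ k, (M w)⁻¹ a k * M w k b) l z = 0 := by
      rw [wDir_congr hΩ (g := fun _ => (1 : Matrix (Fin n) (Fin n) ℂ) a b) ?_ c l z hz]
      · simp [wDir]
      · intro w hw
        rw [← Matrix.nonsing_inv_mul _ (hu w hw), Matrix.mul_apply]
    have hi := fun a b => smooth_diffAt hΩ (smooth_inv hM hdet a b) hz
    have hm := fun a b => smooth_diffAt hΩ (hM a b) hz
    rw [wDir_sum _ fun k _ => (hi a k).fun_mul (hm k b)] at h1
    simp only [wDir_mul (hi _ _) (hm _ _)] at h1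
    rw [Finset.sum_add_distrib] at h1
    simpa [Matrix.mul_apply, hdG, hdM, hG] using h1
  have h2 : dG = -(G * dM * G) := by
    have : dG * M z = -(G * dM) := eq_neg_of_add_eq_zero_left h0
    calc dG = dG * M z * G := by rw [Matrix.mul_assoc, Matrix.mul_nonsing_inv _ (hu z hz), Matrix.mul_one]
      _ = _ := by rw [this, Matrix.neg_mul]
  have h3 := congrFun (congrFun h2 r) q
  simp only [hdG, Matrix.of_apply, Matrix.neg_apply, Matrix.mul_apply, hdM, Finset.sum_mul] at h3
  rw [h3, Finset.sum_comm]

theorem conj_wDir {n : ℕ} (c : ℂ) (f : (Fin n → ℂ) → ℂ) (j : Fin n) (z : Fin n → ℂ) :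
    (starRingEnd ℂ) (wDir c f j z)
      = wDir ((starRingEnd ℂ) c) (fun w => (starRingEnd ℂ) (f w)) j z := by
  have h : fderiv ℝ (fun w => (starRingEnd ℂ) (f w)) z
      = (Complex.conjCLE : ℂ →L[ℝ] ℂ).comp (fderiv ℝ f z) :=
    Complex.conjCLE.comp_fderiv (f := f) (x := z)
  simp only [wDir, h]
  simp [Complex.conj_ofNat]

theorem wDir_cexp {n : ℕ} {f : (Fin n → ℂ) → ℂ} {z : Fin n → ℂ} (hf : DifferentiableAt ℝ f z)
    (c : ℂ) (j : Fin n) :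
    wDir c (fun w => Complex.exp (f w)) j z = Complex.exp (f z) * wDir c f j z := by
  simp only [wDir, hf.hasFDerivAt.cexp.fderiv]
  simp
  ring

theorem trace_dbar_AinvbarDBbar (n : ℕ) (Ω : Set (Fin n → ℂ)) (hΩ : IsOpen Ω)
    (u : (Fin n → ℂ) → ℝ) (hu : ContDiffOn ℝ (⊤ : ℕ∞) u Ω)
    (hpsh : ∀ z ∈ Ω, (hessA u z).PosDef)
    (hKE : ∀ z ∈ Ω, (hessA u z).det = (Real.exp ((n + 1) * u z) : ℂ)) :
    ∀ z ∈ Ω,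
      ∑ i, ∑ j, uInv u z i j •
          mwdzbar (fun w => (mconj (hessA u w))⁻¹ *
            mwdz (fun w' => mconj (hessB u w')) i w) j z
        = ((n : ℂ) + 1) • ((mconj (hessA u z))⁻¹ * mconj (hessB u z)) := by
  set U := cplx u with hU
  have sU : ContDiffOn ℝ (⊤ : ℕ∞) U Ω := Complex.ofRealCLM.contDiff.comp_contDiffOn hu
  set ub : Fin n → (Fin n → ℂ) → ℂ := fun p => wDir Complex.I U p with hub
  have sub : ∀ p, ContDiffOn ℝ (⊤ : ℕ∞) (ub p) Ω := fun p => smooth_wDir hΩ sU _ p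
  set ab : Fin n → Fin n → (Fin n → ℂ) → ℂ := fun p a => wDir (-Complex.I) (ub p) a with hab
  have sab : ∀ p a, ContDiffOn ℝ (⊤ : ℕ∞) (ab p a) Ω := fun p a => smooth_wDir hΩ (sub p) _ a
  set t : Fin n → Fin n → Fin n → (Fin n → ℂ) → ℂ := fun a p q => wDir Complex.I (ab p a) q with ht
  have st : ∀ a p q, ContDiffOn ℝ (⊤ : ℕ∞) (t a p q) Ω := fun a p q => smooth_wDir hΩ (sab p a) _ q
  set Ab : (Fin n → ℂ) → Matrix (Fin n) (Fin n) ℂ := fun w => mconj (hessA u w) with hAb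
  have conjU : (fun w => (starRingEnd ℂ) (U w)) = U := by
    funext w; simp [hU, cplx]
  have eAb : ∀ p q, ∀ w ∈ Ω, Ab w p q = ab p q w := by
    intro p q w hw
    have h1 : Ab w p q = wDir Complex.I (wDir (-Complex.I) U q) p w := by
      simp only [hAb, mconj, hessA, Matrix.map_apply, Matrix.of_apply, wdz_eq_wDir,
        wdzbar_eq_wDir, conj_wDir, ← hU]
      simp [conjU]
    rw [h1, wDir_comm hΩ sU _ _ _ _ w hw]
  have eBb : ∀ p q w, mconj (hessB u w) p q = wDir Complex.I (ub q) p w := by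
    intro p q w
    simp only [mconj, hessB, Matrix.map_apply, Matrix.of_apply, wdz_eq_wDir, conj_wDir, ← hU]
    simp [conjU, hub]
  have et : ∀ i p q, ∀ w ∈ Ω, wDir (-Complex.I) (wDir Complex.I (ub q) p) i w = t i q p w :=
    fun i p q w hw => wDir_comm hΩ (sub q) _ _ _ _ w hw
  have tsymm : ∀ i p q, ∀ w ∈ Ω, t i p q w = t i q p w := by
    intro i p q w hw
    rw [← et i p q w hw, ← et i q p w hw]
    exact wDir_congr hΩ (fun v hv => wDir_comm hΩ sU _ _ _ _ v hv) _ _ w hw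
  have eD : ∀ i p q, ∀ w ∈ Ω, mwdz (fun w' => mconj (hessB u w')) i w p q = t i p q w := by
    intro i p q w hw
    simp only [mwdz, Matrix.of_apply, eBb, wdz_eq_wDir]
    rw [et i p q w hw, tsymm i q p w hw]
  have sAb : ∀ p q, ContDiffOn ℝ (⊤ : ℕ∞) (fun w => Ab w p q) Ω :=
    fun p q => (sab p q).congr (eAb p q)
  have edet : ∀ w ∈ Ω, (Ab w).det = Complex.exp (((n : ℂ) + 1) * U w) := by
    intro w hw
    have h1 : (Ab w).det = (starRingEnd ℂ) (hessA u w).det := by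
      rw [RingHom.map_det]; rfl
    rw [h1, hKE w hw, Complex.conj_ofReal]
    simp [hU, cplx]
  have hdet : ∀ w ∈ Ω, (Ab w).det ≠ 0 := fun w hw => by
    rw [edet w hw]; exact Complex.exp_ne_zero _
  have sG := smooth_inv sAb hdet
  have edA : ∀ l p q, ∀ w ∈ Ω, wDir Complex.I (fun w => Ab w p q) l w = t q p l w :=
    fun l p q w hw => wDir_congr hΩ (eAb p q) _ _ w hw
  -- first derivative of the equation
  have first : ∀ q, ∀ w ∈ Ω, ∑ i, ∑ j, (Ab w)⁻¹ i j * t i j q w = ((n : ℂ) + 1) * ub q w := by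
    intro q w hw
    have h1 := wDir_det (fun a b => smooth_diffAt hΩ (sAb a b) hw) (hdet w hw) Complex.I q
    have dU := smooth_diffAt hΩ sU hw
    rw [wDir_congr hΩ edet _ _ w hw, wDir_cexp (dU.const_mul _), wDir_const_mul dU,
      ← edet w hw] at h1
    have h2 := mul_left_cancel₀ (hdet w hw) h1
    simp only [edA q _ _ w hw] at h2
    exact h2.symm
  intro z hz
  have dG := fun a b => smooth_diffAt hΩ (sG a b) hz
  have dt := fun a b c => smooth_diffAt hΩ (st a b c) hz
  have iG : ∀ l a b, wDir Complex.I (fun w => (Ab w)⁻¹ a b) l z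
      = - ∑ c, ∑ d, (Ab z)⁻¹ a c * t d c l z * (Ab z)⁻¹ d b := by
    intro l a b
    rw [wDir_inv hΩ sAb hdet _ _ _ _ z hz]
    simp only [edA l _ _ z hz]
  -- second derivative of the equation
  have second : ∀ p q, ∑ i, ∑ j,
      ((- ∑ c, ∑ d, (Ab z)⁻¹ i c * t d c p z * (Ab z)⁻¹ d j) * t i j q z
        + (Ab z)⁻¹ i j * wDir Complex.I (t i j q) p z)
      = ((n : ℂ) + 1) * wDir Complex.I (ub q) p z := by
    intro p q
    have h1 := wDir_congr hΩ (first q) Complex.I p z hz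
    rw [wDir_const_mul (smooth_diffAt hΩ (sub q) hz), wDir_sum] at h1
    · rw [← h1]
      refine Finset.sum_congr rfl fun i _ => ?_
      rw [wDir_sum _ fun j _ => (dG i j).fun_mul (dt i j q)]
      refine Finset.sum_congr rfl fun j _ => ?_
      rw [wDir_mul (dG i j) (dt i j q), iG]
    · intro i _
      exact DifferentiableAt.fun_sum fun j _ => (dG i j).fun_mul (dt i j q)
  have tt : ∀ i j p q, wDir Complex.I (t i p q) j z = wDir Complex.I (t i j q) p z := by
    intro i j p q
    rw [wDir_congr hΩ (tsymm i p q) _ _ z hz, wDir_congr hΩ (tsymm i j q) _ _ z hz]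
    exact wDir_comm hΩ (sab q i) _ _ _ _ z hz
  have huInv : ∀ i j, uInv u z i j = (Ab z)⁻¹ i j := by
    intro i j
    have hT : Ab z = (hessA u z)ᵀ := by
      have hH := (hpsh z hz).isHermitian
      ext a b
      have := congrFun (congrFun hH b) a
      simpa [hAb, mconj, Matrix.conjTranspose_apply] using this
    rw [hT, ← Matrix.transpose_nonsing_inv]
    rfl
  ext r q
  simp only [Matrix.sum_apply, Matrix.smul_apply, smul_eq_mul, huInv]
  have hL : ∀ i j, mwdzbar (fun w => (Ab w)⁻¹ *
            mwdz (fun w' => mconj (hessB u w')) i w) j z r q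
      = ∑ p, ((- ∑ c, ∑ d, (Ab z)⁻¹ r c * t d c j z * (Ab z)⁻¹ d p) * t i p q z
          + (Ab z)⁻¹ r p * wDir Complex.I (t i j q) p z) := by
    intro i j
    simp only [mwdzbar, Matrix.of_apply, wdzbar_eq_wDir]
    rw [wDir_congr hΩ (g := fun w => ∑ p, (Ab w)⁻¹ r p * t i p q w) ?_ _ _ z hz]
    · rw [wDir_sum _ fun p _ => (dG r p).fun_mul (dt i p q)]
      refine Finset.sum_congr rfl fun p _ => ?_
      rw [wDir_mul (dG r p) (dt i p q), iG, tt]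
    · intro w hw
      rw [Matrix.mul_apply]
      exact Finset.sum_congr rfl fun p _ => by rw [eD i p q w hw]
  have hR : ((n : ℂ) + 1) * ((mconj (hessA u z))⁻¹ * mconj (hessB u z)) r q
      = ∑ p, (Ab z)⁻¹ r p * ∑ i, ∑ j,
      ((- ∑ c, ∑ d, (Ab z)⁻¹ i c * t d c p z * (Ab z)⁻¹ d j) * t i j q z
        + (Ab z)⁻¹ i j * wDir Complex.I (t i j q) p z) := by
    rw [Matrix.mul_apply, Finset.mul_sum]
    refine Finset.sum_congr rfl fun p _ => ?_
    rw [second, eBb]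
    ring
  rw [hR]
  refine (Finset.sum_congr rfl fun i _ => Finset.sum_congr rfl fun j _ =>
    congrArg (fun x => (Ab z)⁻¹ i j * x) (hL i j)).trans ?_
  generalize (Ab z)⁻¹ = G
  have e1 : ∀ i j, G i j * ∑ p, ((- ∑ c, ∑ d, G r c * t d c j z * G d p) * t i p q z
          + G r p * wDir Complex.I (t i j q) p z)
      = - (∑ p, ∑ c, ∑ d, G i j * (G r c * t d c j z * G d p) * t i p q z)
        + ∑ p, G i j * (G r p * wDir Complex.I (t i j q) p z) := by
    intro i j
    simp only [Finset.mul_sum, Finset.sum_mul, Finset.sum_add_distrib, mul_add, neg_mul, mul_neg,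
      Finset.sum_neg_distrib, mul_assoc]
  have e2 : ∀ p, G r p * ∑ i, ∑ j,
      ((- ∑ c, ∑ d, G i c * t d c p z * G d j) * t i j q z
        + G i j * wDir Complex.I (t i j q) p z)
      = - (∑ i, ∑ j, ∑ c, ∑ d, G r p * (G i c * t d c p z * G d j) * t i j q z)
        + ∑ i, ∑ j, G r p * (G i j * wDir Complex.I (t i j q) p z) := by
    intro p
    simp only [Finset.mul_sum, Finset.sum_mul, Finset.sum_add_distrib, mul_add, neg_mul, mul_neg,
      Finset.sum_neg_distrib, mul_assoc]
  refine (Finset.sum_congr rfl fun i _ => Finset.sum_congr rfl fun j _ => e1 i j).trans ?_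
  refine Eq.trans ?_ (Finset.sum_congr rfl fun p _ => e2 p).symm
  simp only [Finset.sum_add_distrib, Finset.sum_neg_distrib]
  congr 1
  · congr 1
    -- left: `i j p c d`; right: `p i j c d` with `j ↦ c`, `p ↦ j`, `c ↦ p`
    rw [Finset.sum_comm (s := Finset.univ) (t := Finset.univ)
      (f := fun p i => ∑ j, ∑ c, ∑ d, G r p * (G i c * t d c p z * G d j) * t i j q z)]
    refine Finset.sum_congr rfl fun i _ => ?_
    have c1 : ∀ j, ∑ p, ∑ c, ∑ d, G i j * (G r c * t d c j z * G d p) * t i p q z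
        = ∑ c, ∑ p, ∑ d, G i j * (G r c * t d c j z * G d p) * t i p q z :=
      fun j => Finset.sum_comm
    have c2 : ∀ p, ∑ j, ∑ c, ∑ d, G r p * (G i c * t d c p z * G d j) * t i j q z
        = ∑ c, ∑ j, ∑ d, G r p * (G i c * t d c p z * G d j) * t i j q z :=
      fun p => Finset.sum_comm
    simp only [c1, c2]
    rw [Finset.sum_comm]
    refine Finset.sum_congr rfl fun c _ => Finset.sum_congr rfl fun j _ =>
      Finset.sum_congr rfl fun p _ => Finset.sum_congr rfl fun d _ => ?_
    rw [tsymm d c j z hz]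
    ring
  · have c3 : ∀ i, ∑ j, ∑ p, G i j * (G r p * wDir Complex.I (t i j q) p z)
        = ∑ p, ∑ j, G i j * (G r p * wDir Complex.I (t i j q) p z) := fun i => Finset.sum_comm
    simp only [c3]
    rw [Finset.sum_comm]
    refine Finset.sum_congr rfl fun c _ => Finset.sum_congr rfl fun j _ =>
      Finset.sum_congr rfl fun p _ => ?_
    ring

end
end
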